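/- arXiv:2004.05677 — 2 statements merged into one kernel-verified Lean document; each statement's English description precedes it below -/
import Mathlib

section
/- Let p be an odd prime, n ≥ 1, q = p^(2^n), and G = PGL₂(F_q). Then the Möbius function of the subgroup lattice of G, evaluated at the pair (trivial subgroup, full group), equals 0. (This is the numerical consequence of the paper's main theorem that the order complex of the proper part of the subgroup lattice of G is contractible, since contractibility forces reduced Euler characteristic μ_G(1_G) = χ̃ = 0.) -/
open Matrix

/-- `PGL₂(F)`: the projective general linear group, i.e. the quotient of `GL₂(F)`
by its center. -/
abbrev ProjectiveGL2 (F : Type) [Field F] : Type :=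
  Matrix.GeneralLinearGroup (Fin 2) F ⧸ Subgroup.center (Matrix.GeneralLinearGroup (Fin 2) F)

/-- The image of the natural map `SL₂(F) → PGL₂(F)`: the socle of `PGL₂(F)`,
isomorphic to `PSL₂(F)`. -/
def socleSL2 (F : Type) [Field F] : Subgroup (ProjectiveGL2 F) :=
  ((QuotientGroup.mk' (Subgroup.center (Matrix.GeneralLinearGroup (Fin 2) F))).comp
    Matrix.SpecialLinearGroup.toGL).range

/- Let `G = PGL₂(F)` and let `N` be the image of `SL₂(F)`, of index two. Weisner's theorem for `N`
expresses `μ(⊥, ⊤)` through the values `μ(⟨t⟩, ⊤)` at the involutions `t ∉ N`, and Weisner's theorem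
for the centralizer `C(t)` expresses the latter through the values `μ(H, ⊤)` at the subgroups
`H ≠ ⟨t⟩` with `H ∩ C(t) = ⟨t⟩`. Each of these vanishes because the proper subgroups containing `H`
have a greatest element `C(z) ≠ H`: every proper subgroup `K` containing `t` centralizes an
involution, and for `K ≥ H` this involution does not depend on `K`.

To find the involution, suppose first that `K` contains elements of order `p`. Then some element of
`K` outside `N` normalizes a unipotent subgroup of `K` and acts on it through a nonsquare of `F`.
Since `|F| = p ^ 2 ^ n`, a nonsquare lies in no proper subfield, so `K` contains all transvections
and `K = G`. Otherwise the maximal tori partition `K`. As `2` is a square in `F`, elements of order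
four lie in `N`, and counting the elements of `K` inside and outside `N` shows that a torus is
normal in `K`; its involution is the one required. -/

section Mobius

open IncidenceAlgebra

variable {α R : Type*} [Ring R]

theorem eq_mu_of_finsum_eq_zero [PartialOrder α] [LocallyFiniteOrder α] [DecidableEq α]
    {f : α → α → R} (hrefl : ∀ x, f x x = 1)
    (hsum : ∀ x y, x < y → ∑ᶠ z ∈ {z | x ≤ z ∧ z ≤ y}, f x z = 0) {x y : α} (hxy : x ≤ y) :
    f x y = mu R x y := by
  induction hn : (Finset.Icc x y).card using Nat.strong_induction_on generalizing y with
  | h n ih =>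
  obtain rfl | hlt := hxy.eq_or_lt
  · rw [hrefl, mu_self]
  have hset : {z | x ≤ z ∧ z ≤ y} = (Finset.Icc x y : Set α) := (Finset.coe_Icc x y).symm
  have hf := hsum x y hlt
  have hmu := sum_Icc_mu_right (𝕜 := R) x y
  rw [hset, finsum_mem_coe_finset, ← Finset.Ico_insert_right hxy,
    Finset.sum_insert Finset.right_notMem_Ico] at hf
  rw [if_neg hlt.ne, ← Finset.Ico_insert_right hxy,
    Finset.sum_insert Finset.right_notMem_Ico] at hmu
  have hIco : ∑ z ∈ Finset.Ico x y, f x z = ∑ z ∈ Finset.Ico x y, mu R x z := by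
    refine Finset.sum_congr rfl fun z hz ↦ ?_
    obtain ⟨hxz, hzy⟩ := Finset.mem_Ico.1 hz
    exact ih _ (hn ▸ Finset.card_lt_card (Finset.Icc_ssubset_Icc_right hxy le_rfl hzy)) hxz rfl
  rw [eq_neg_of_add_eq_zero_left hf, eq_neg_of_add_eq_zero_left hmu, hIco]

section Weisner

variable [SemilatticeInf α] [OrderTop α] [LocallyFiniteOrder α] [DecidableEq α]

/- Weisner's theorem: the elements above `b` are sorted by their meet with `a`; by induction all
the fibres but the one over `b` contribute `0`. -/
theorem sum_mu_top_filter_inf_eq [Fintype α] {a : α} (ha : a ≠ ⊤) (b : α) :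
    ∑ x with x ⊓ a = b, mu R x ⊤ = 0 := by
  induction b using WellFoundedGT.induction with
  | ind b ih =>
  by_cases hba : b ≤ a
  swap
  · exact Finset.sum_eq_zero fun x hx ↦ (hba ((Finset.mem_filter.1 hx).2 ▸ inf_le_right)).elim
  have hb : b ≠ ⊤ := fun h ↦ ha (top_le_iff.1 (h ▸ hba))
  have hIcc : ∑ x ∈ Finset.Icc b ⊤, mu R x ⊤ = 0 := by rw [sum_Icc_mu_left, if_neg hb]
  have hfiber {c : α} (hc : b ≤ c) :
      ({x ∈ Finset.Icc b ⊤ | x ⊓ a = c} : Finset α) = ({x | x ⊓ a = c} : Finset α) := by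
    ext x
    simp only [Finset.mem_filter, Finset.mem_Icc, le_top, and_true, Finset.mem_univ, true_and,
      and_iff_right_iff_imp]
    exact fun hx ↦ hc.trans (hx ▸ inf_le_left)
  rw [← Finset.sum_fiberwise_of_maps_to (t := Finset.Icc b a) (g := (· ⊓ a)) fun x hx ↦
      Finset.mem_Icc.2 ⟨le_inf (Finset.mem_Icc.1 hx).1 hba, inf_le_right⟩,
    Finset.sum_eq_single b, hfiber le_rfl] at hIcc
  · exact hIcc
  · intro c hc hcb
    obtain ⟨hbc, -⟩ := Finset.mem_Icc.1 hc
    rw [hfiber hbc]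
    exact ih c (hbc.lt_of_ne' hcb)
  · exact fun h ↦ (h (Finset.mem_Icc.2 ⟨le_rfl, hba⟩)).elim

theorem mu_top_eq_zero_of_forall_le [Finite α] {b m : α} (hm : m ≠ ⊤) (hbm : b < m)
    (hle : ∀ x, b ≤ x → x ≠ ⊤ → x ≤ m) : mu R b ⊤ = 0 := by
  have := Fintype.ofFinite α
  rw [← sum_mu_top_filter_inf_eq (R := R) hm b, Finset.sum_eq_single_of_mem b]
  · simpa using hbm.le
  · intro x hx hxb
    have hxm : x ⊓ m = b := (Finset.mem_filter.1 hx).2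
    obtain rfl | hx := eq_or_ne x ⊤
    · exact (hbm.ne (top_inf_eq m ▸ hxm.symm)).elim
    · exact (hxb (inf_eq_left.2 (hle x (hxm ▸ inf_le_left) hx) ▸ hxm)).elim

end Weisner

end Mobius

section IndexTwo

open Subgroup

variable {G : Type*} [Group G] {N : Subgroup G}

theorem eq_zpowers_of_inf_eq_bot (hN : N.index = 2) {H : Subgroup G} (hH : H ⊓ N = ⊥) {t : G}
    (ht : t ∈ H) (htN : t ∉ N) : H = zpowers t ∧ t * t = 1 := by
  have eq_one {g : G} (hg : g ∈ H) (hgN : g ∈ N) : g = 1 := by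
    rw [← mem_bot, ← hH]; exact ⟨hg, hgN⟩
  refine ⟨le_antisymm (fun s hs ↦ ?_) (zpowers_le.2 ht),
    eq_one (mul_mem ht ht) (mul_self_mem_of_index_two hN t)⟩
  by_cases hsN : s ∈ N
  · exact eq_one hs hsN ▸ one_mem _
  · have hst : t⁻¹ * s ∈ N := by simp [mul_mem_iff_of_index_two hN, htN, hsN]
    exact inv_mul_eq_one.1 (eq_one (mul_mem (inv_mem ht) hs) hst) ▸ mem_zpowers t

theorem mu_bot_top_eq_zero_of_index_two [Finite G] [LocallyFiniteOrder (Subgroup G)]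
    [DecidableEq (Subgroup G)] {R : Type*} [Ring R] (hN : N.index = 2)
    (h : ∀ t ∉ N, t * t = 1 → IncidenceAlgebra.mu R (zpowers t) ⊤ = 0) :
    IncidenceAlgebra.mu R (⊥ : Subgroup G) ⊤ = 0 := by
  have := Fintype.ofFinite (Subgroup G)
  have hNtop : N ≠ ⊤ := by rintro rfl; simp at hN
  rw [← sum_mu_top_filter_inf_eq (R := R) hNtop ⊥, Finset.sum_eq_single_of_mem ⊥ (by simp)]
  intro H hH hHbot
  have hHN : H ⊓ N = ⊥ := (Finset.mem_filter.1 hH).2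
  obtain ⟨t, ht, htN⟩ : ∃ t ∈ H, t ∉ N := by
    by_contra! hle
    exact hHbot (by rwa [inf_eq_left.2 hle] at hHN)
  obtain ⟨rfl, htt⟩ := eq_zpowers_of_inf_eq_bot hN hHN ht htN
  exact h t htN htt

end IndexTwo

section NormalPartition

open Subgroup Group

variable {G : Type*} [Group G]

/-- A normal partition of a group (in the sense of Baer, Kegel and Suzuki): a conjugation-invariant
family of nontrivial subgroups such that every nontrivial element lies in exactly one of them. -/
structure IsNormalPartition (P : Set (Subgroup G)) : Prop where
  ne_bot : ∀ T ∈ P, T ≠ ⊥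
  exists_mem : ∀ g ≠ 1, ∃ T ∈ P, g ∈ T
  eq_of_mem : ∀ S ∈ P, ∀ T ∈ P, ∀ g ≠ 1, g ∈ S → g ∈ T → S = T
  map_conj_mem : ∀ T ∈ P, ∀ k : G, T.map (MulAut.conj k).toMonoidHom ∈ P

/-- A normal partition whose members behave like the maximal tori of `PGL₂`: they are abelian and
have index at most two in their normalizers. -/
structure IsToralPartition (P : Set (Subgroup G)) : Prop extends IsNormalPartition P where
  commute : ∀ T ∈ P, ∀ g ∈ T, ∀ h ∈ T, Commute g h
  relIndex_normalizer_dvd_two : ∀ T ∈ P, T.relIndex (normalizer (T : Set G)) ∣ 2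

theorem mem_conjugatesOfSet_iff_exists_conj_mem {s : Set G} {g : G} :
    g ∈ conjugatesOfSet s ↔ ∃ k, k * g * k⁻¹ ∈ s := by
  simp only [mem_conjugatesOfSet_iff, isConj_comm (h := g), isConj_iff]
  exact ⟨fun ⟨_, hs, k, hk⟩ ↦ ⟨k, hk ▸ hs⟩, fun ⟨k, hk⟩ ↦ ⟨_, hk, k, rfl⟩⟩

theorem conj_mem_conjugatesOfSet_iff {s : Set G} {k g : G} :
    k * g * k⁻¹ ∈ conjugatesOfSet s ↔ g ∈ conjugatesOfSet s :=
  ⟨fun h ↦ by simpa [mul_assoc] using conj_mem_conjugatesOfSet (c := k⁻¹) h,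
    conj_mem_conjugatesOfSet⟩

namespace IsNormalPartition

variable {P : Set (Subgroup G)}

theorem mem_normalizer (hP : IsNormalPartition P) {T : Subgroup G} (hT : T ∈ P) {g k : G}
    (hg : g ≠ 1) (hgT : g ∈ T) (hkg : k * g * k⁻¹ ∈ T) : k ∈ normalizer (T : Set G) :=
  mem_normalizer_iff_map_conj_eq.2 <| hP.eq_of_mem _ (hP.map_conj_mem T hT k) T hT (k * g * k⁻¹)
    (by simpa using hg) ⟨g, hgT, rfl⟩ hkg

theorem mem_normalizer_of_commute (hP : IsNormalPartition P) {T : Subgroup G} (hT : T ∈ P)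
    {g h : G} (hg : g ≠ 1) (hgT : g ∈ T) (hgh : Commute g h) : h ∈ normalizer (T : Set G) :=
  hP.mem_normalizer hT hg hgT (by rwa [← hgh.eq, mul_inv_cancel_right])

theorem normal_of_forall_conj_mem (hP : IsNormalPartition P) {T : Subgroup G} (hT : T ∈ P) {g : G}
    (hg : g ≠ 1) (hgT : ∀ k, k * g * k⁻¹ ∈ T) : T.Normal :=
  normalizer_eq_top_iff.1 <| eq_top_iff.2 fun k _ ↦
    hP.mem_normalizer hT hg (by simpa using hgT 1) (hgT k)

theorem ncard_setOf_conj_mem (hP : IsNormalPartition P) {T : Subgroup G} (hT : T ∈ P) {g : G}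
    (hg : g ≠ 1) (hgT : g ∈ conjugatesOfSet (T : Set G)) :
    {k | k * g * k⁻¹ ∈ T}.ncard = Nat.card (normalizer (T : Set G)) := by
  obtain ⟨k₀, hk₀⟩ := mem_conjugatesOfSet_iff_exists_conj_mem.1 hgT
  have himage : {k | k * g * k⁻¹ ∈ T} = (· * k₀) '' (normalizer (T : Set G) : Set G) := by
    ext k
    simp only [Set.mem_ofPred_eq, Set.image_mul_right, Set.mem_preimage, SetLike.mem_coe]
    refine ⟨fun hk ↦ hP.mem_normalizer hT (by simpa using hg) hk₀ (by simpa [mul_assoc] using hk),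
      fun hk ↦ ?_⟩
    simpa [mul_assoc] using (mem_normalizer_iff.1 hk _).1 hk₀
  rw [himage, Set.ncard_image_of_injective _ (mul_left_injective k₀), ← Nat.card_coe_set_eq]
  rfl

/- Double counting of the pairs `(k, g)` with `g ∈ A` and `k * g * k⁻¹ ∈ T`. -/
theorem ncard_inter_conjugatesOfSet [Finite G] (hP : IsNormalPartition P) {T : Subgroup G}
    (hT : T ∈ P) {A : Set G} (hA : ∀ k, ∀ g ∈ A, k * g * k⁻¹ ∈ A) (h1 : 1 ∉ A) :
    (A ∩ conjugatesOfSet T).ncard = (normalizer (T : Set G)).index * (A ∩ T).ncard := by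
  classical
  have := Fintype.ofFinite G
  have habove (k : G) : Finset.card {g ∈ (A ∩ conjugatesOfSet T).toFinset | k * g * k⁻¹ ∈ T} =
      (A ∩ T).ncard := by
    rw [← Set.ncard_coe_finset, ← Set.ncard_image_of_injective _ (MulAut.conj k).injective]
    congr 1
    ext g
    simp only [Finset.coe_filter, Set.mem_toFinset, Set.mem_image, Set.mem_ofPred_eq]
    constructor
    · rintro ⟨h, ⟨⟨hhA, -⟩, hhT⟩, rfl⟩
      exact ⟨hA k h hhA, hhT⟩
    · rintro ⟨hgA, hgT⟩
      have hkg : k * (k⁻¹ * g * k⁻¹⁻¹) * k⁻¹ = g := by group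
      exact ⟨k⁻¹ * g * k⁻¹⁻¹, ⟨⟨hA k⁻¹ g hgA, mem_conjugatesOfSet_iff_exists_conj_mem.2
        ⟨k, hkg.symm ▸ hgT⟩⟩, hkg.symm ▸ hgT⟩, hkg⟩
  have hbelow (g : G) (hg : g ∈ (A ∩ conjugatesOfSet T).toFinset) :
      Finset.card {k | k * g * k⁻¹ ∈ T} = Nat.card (normalizer (T : Set G)) := by
    obtain ⟨hgA, hgT⟩ := Set.mem_toFinset.1 hg
    rw [← hP.ncard_setOf_conj_mem hT (fun h ↦ h1 (h ▸ hgA)) hgT, ← Set.ncard_coe_finset,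
      Finset.coe_filter_univ]
  refine Nat.eq_of_mul_eq_mul_right (Nat.card_pos (α := normalizer (T : Set G))) ?_
  rw [mul_right_comm, index_mul_card, Nat.card_eq_fintype_card (α := G), ← Finset.card_univ,
    Set.ncard_eq_toFinset_card' (A ∩ conjugatesOfSet T)]
  exact (Finset.card_mul_eq_card_mul _ (fun k _ ↦ habove k) hbelow).symm

theorem mem_conjugatesOfSet_of_mem (hP : IsNormalPartition P) {S T : Subgroup G} (hS : S ∈ P)
    (hT : T ∈ P) {g h : G} (hg : g ≠ 1) (hgS : g ∈ S) (hgT : g ∈ conjugatesOfSet (T : Set G))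
    (hhS : h ∈ S) : h ∈ conjugatesOfSet (T : Set G) := by
  obtain ⟨k, hk⟩ := mem_conjugatesOfSet_iff_exists_conj_mem.1 hgT
  have hST : S.map (MulAut.conj k).toMonoidHom = T :=
    hP.eq_of_mem _ (hP.map_conj_mem S hS k) T hT (k * g * k⁻¹) (by simpa using hg) ⟨g, hgS, rfl⟩ hk
  exact mem_conjugatesOfSet_iff_exists_conj_mem.2 ⟨k, hST ▸ ⟨h, hhS, rfl⟩⟩

/- If some `m` has `m ^ 2 ≠ 1` then every element outside `N` inverts it, so its conjugates are
`m` and `m⁻¹`; otherwise the group is an elementary abelian `2`-group. -/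
theorem exists_normal_of_forall_mul_self_eq_one (hP : IsNormalPartition P) {N : Subgroup G}
    (hN : N.index = 2) (hinv : ∀ s ∉ N, s * s = 1) : ∃ T ∈ P, T.Normal := by
  obtain ⟨t, htN⟩ : ∃ t, t ∉ N := by
    by_contra! h
    rw [(eq_top_iff' N).2 h, index_top] at hN
    omega
  by_cases hexp : ∀ m : G, m * m = 1
  · have ht : t ≠ 1 := fun h ↦ htN (h ▸ one_mem N)
    obtain ⟨T, hT, htT⟩ := hP.exists_mem t ht
    have hself (g : G) : g⁻¹ = g := inv_eq_of_mul_eq_one_left (hexp g)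
    have hconj (k : G) : k * t * k⁻¹ = t := by
      rw [mul_inv_eq_iff_eq_mul, ← hself (k * t), _root_.mul_inv_rev, hself, hself]
    exact ⟨T, hT, hP.normal_of_forall_conj_mem hT ht fun k ↦ (hconj k).symm ▸ htT⟩
  · push Not at hexp
    obtain ⟨m, hm⟩ := hexp
    have hmN : m ∈ N := not_not.1 fun h ↦ hm (hinv m h)
    have hconj_inv {s : G} (hs : s ∉ N) : s * m * s⁻¹ = m⁻¹ := by
      have hsm : s * m ∉ N := fun h ↦ hs ((mul_mem_cancel_right hmN).1 h)
      rw [inv_eq_of_mul_eq_one_left (hinv s hs), eq_inv_iff_mul_eq_one, mul_assoc (s * m),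
        hinv _ hsm]
    have hm1 : m ≠ 1 := by rintro rfl; simp at hm
    obtain ⟨T, hT, hmT⟩ := hP.exists_mem m hm1
    refine ⟨T, hT, hP.normal_of_forall_conj_mem hT hm1 fun k ↦ ?_⟩
    by_cases hk : k ∈ N
    · have htk : t * k ∉ N := fun h ↦ htN ((mul_mem_cancel_right hk).1 h)
      have hmk : k * m * k⁻¹ = m := (MulAut.conj t).injective <| by
        simpa [mul_assoc, hconj_inv htN] using hconj_inv htk
      exact hmk.symm ▸ hmT
    · exact (hconj_inv hk).symm ▸ inv_mem hmT

end IsNormalPartition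

theorem conj_mul_eq_inv {a b : G} (ha : a * a = 1) (hb : b * b = 1) :
    a * (a * b) * a⁻¹ = (a * b)⁻¹ := by
  rw [← mul_assoc, ha, one_mul, _root_.mul_inv_rev, inv_eq_of_mul_eq_one_left hb]

theorem conj_mul_conj_eq_one {t : G} (ht : t * t = 1) (k : G) :
    k * t * k⁻¹ * (k * t * k⁻¹) = 1 := by
  rw [conj_mul, ht, mul_one, mul_inv_cancel]

theorem conj_mem_iff_of_index_two {N : Subgroup G} (hN : N.index = 2) {k g : G} :
    k * g * k⁻¹ ∈ N ↔ g ∈ N := by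
  rw [(normal_of_index_eq_two hN).mem_comm_iff, inv_mul_cancel_left]

theorem conj_eq_inv_of_mem_image {t v : G} (ht : t * t = 1)
    (hv : v ∈ (t * ·) '' conjugatesOf t) : t * v * t⁻¹ = v⁻¹ := by
  obtain ⟨w, hw, rfl⟩ := hv
  obtain ⟨k, rfl⟩ := isConj_iff.1 hw
  exact conj_mul_eq_inv ht (conj_mul_conj_eq_one ht k)

theorem commute_of_mem_image {t : G} (ht : t * t = 1)
    (hconj : ∀ k, ∀ v ∈ (t * ·) '' conjugatesOf t, k * v * k⁻¹ ∈ (t * ·) '' conjugatesOf t)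
    {u v : G} (hu : u ∈ (t * ·) '' conjugatesOf t) (hv : v ∈ (t * ·) '' conjugatesOf t) :
    Commute u v := by
  obtain ⟨w, hw, rfl⟩ := hv
  obtain ⟨k, rfl⟩ := isConj_iff.1 hw
  have hku : k * t * k⁻¹ * u * (k * t * k⁻¹)⁻¹ = u⁻¹ := by
    have := congrArg (k * · * k⁻¹) (conj_eq_inv_of_mem_image ht (hconj k⁻¹ u hu))
    simpa [mul_assoc] using this
  refine Commute.symm (mul_inv_eq_iff_eq_mul.1 ?_)
  calc t * (k * t * k⁻¹) * u * (t * (k * t * k⁻¹))⁻¹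
      = t * (k * t * k⁻¹ * u * (k * t * k⁻¹)⁻¹) * t⁻¹ := by group
    _ = u := by rw [hku, ← conj_inv, conj_eq_inv_of_mem_image ht hu, inv_inv]

theorem ncard_compl_inter_eq_ncard_inter_of_index_two {N : Subgroup G} (hN : N.index = 2)
    {H : Subgroup G} {t : G} (ht : t ∈ H) (htN : t ∉ N) :
    ((N : Set G)ᶜ ∩ H).ncard = ((N : Set G) ∩ H).ncard := by
  have himage : (N : Set G)ᶜ ∩ H = (t * ·) '' ((N : Set G) ∩ H) := by
    ext g
    simp [mul_mem_iff_of_index_two hN, htN, mul_mem_cancel_left, ht]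
  rw [himage, Set.ncard_image_of_injective _ (mul_right_injective t)]

theorem two_mul_ncard_compl_inter_of_index_two [Finite G] {N : Subgroup G} (hN : N.index = 2)
    {H : Subgroup G} {t : G} (ht : t ∈ H) (htN : t ∉ N) :
    2 * ((N : Set G)ᶜ ∩ H).ncard = Nat.card H := by
  nth_rw 1 [two_mul, ncard_compl_inter_eq_ncard_inter_of_index_two hN ht htN]
  rw [Set.inter_comm, Set.inter_comm _ᶜ, ← Set.sdiff_eq, Set.ncard_inter_add_ncard_sdiff_eq_ncard,
    ← Nat.card_coe_set_eq]
  rfl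

namespace IsNormalPartition

variable {P : Set (Subgroup G)} {N T : Subgroup G} {t : G}

theorem mem_normalizer_of_mul_mem (hP : IsNormalPartition P) (hT : T ∈ P) {a b : G}
    (ha : a * a = 1) (hb : b * b = 1) (hab : a * b ≠ 1) (habT : a * b ∈ T) :
    a ∈ normalizer (T : Set G) :=
  hP.mem_normalizer hT hab habT (conj_mul_eq_inv ha hb ▸ inv_mem habT)

theorem two_mul_ncard_compl_inter_conjugatesOfSet [Finite G] (hP : IsNormalPartition P)
    (hT : T ∈ P) (hN : N.index = 2) (ht : t ∈ T) (htN : t ∉ N) :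
    2 * ((N : Set G)ᶜ ∩ conjugatesOfSet T).ncard =
      (normalizer (T : Set G)).index * Nat.card T := by
  rw [hP.ncard_inter_conjugatesOfSet hT
    (fun k g hg ↦ by simpa [conj_mem_iff_of_index_two hN] using hg) (by simp),
    ← two_mul_ncard_compl_inter_of_index_two hN ht htN]
  ring

theorem ncard_compl_inter_conjugatesOfSet_eq_add [Finite G] (hP : IsNormalPartition P)
    (hT : T ∈ P) (hN : N.index = 2) (ht : t ∈ T) (htN : t ∉ N) :
    ((N : Set G)ᶜ ∩ conjugatesOfSet T).ncard =
      (normalizer (T : Set G)).index + (((N : Set G) \ {1}) ∩ conjugatesOfSet T).ncard := by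
  have hinsert : insert 1 (((N : Set G) \ {1}) ∩ T) = (N : Set G) ∩ T := by
    ext g
    by_cases hg : g = 1 <;> simp [hg]
  rw [hP.ncard_inter_conjugatesOfSet hT
    (fun k g hg ↦ by simpa [conj_mem_iff_of_index_two hN] using hg) (by simp),
    hP.ncard_inter_conjugatesOfSet hT
    (fun k g hg ↦ by simpa [conj_mem_iff_of_index_two hN] using hg) (by simp),
    ncard_compl_inter_eq_ncard_inter_of_index_two hN ht htN, ← hinsert,
    Set.ncard_insert_of_notMem (by simp)]
  ring

theorem compl_subset_conjugatesOfSet [Finite G] (hP : IsNormalPartition P)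
    (hT : T ∈ P) (hTn : normalizer (T : Set G) = T) (hN : N.index = 2) (ht : t ∈ T)
    (htN : t ∉ N) : (N : Set G)ᶜ ⊆ conjugatesOfSet (T : Set G) := by
  have h₁ := hP.two_mul_ncard_compl_inter_conjugatesOfSet hT hN ht htN
  have h₂ := two_mul_ncard_compl_inter_of_index_two hN (H := ⊤) (mem_top t) htN
  rw [hTn, index_mul_card, ← card_top, ← h₂, coe_top, Set.inter_univ] at h₁
  exact Set.inter_eq_left.1 (Set.eq_of_subset_of_ncard_le Set.inter_subset_left (by omega))

theorem ncard_sdiff_conjugatesOfSet [Finite G] (hP : IsNormalPartition P)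
    (hT : T ∈ P) (hTn : normalizer (T : Set G) = T) (hN : N.index = 2) (ht : t ∈ T)
    (htN : t ∉ N) : ((N : Set G) \ (conjugatesOfSet T \ {1})).ncard = T.index := by
  have h₁ := hP.ncard_compl_inter_conjugatesOfSet_eq_add hT hN ht htN
  have h₂ := ncard_compl_inter_eq_ncard_inter_of_index_two hN (H := ⊤) (mem_top t) htN
  have h₃ := Set.ncard_inter_add_ncard_sdiff_eq_ncard (N : Set G) (conjugatesOfSet T \ {1})
  rw [hTn, Set.inter_eq_left.2 (hP.compl_subset_conjugatesOfSet hT hTn hN ht htN)] at h₁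
  rw [coe_top, Set.inter_univ, Set.inter_univ, h₁] at h₂
  have h₄ : (N : Set G) ∩ (conjugatesOfSet T \ {1}) = ((N : Set G) \ {1}) ∩ conjugatesOfSet T := by
    ext g
    simp [and_assoc, and_comm]
  rw [h₄] at h₃
  omega

end IsNormalPartition

namespace IsToralPartition

variable {P : Set (Subgroup G)} {N T : Subgroup G} {t : G}

theorem mul_self_mem_of_mem_normalizer (hP : IsToralPartition P) (hT : T ∈ P) {g : G}
    (hg : g ∈ normalizer (T : Set G)) : g * g ∈ T := by
  obtain ⟨a, -, ha⟩ := relIndex_dvd_two_iff.1 (hP.relIndex_normalizer_dvd_two T hT)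
  obtain hga | hgT := ha g hg
  · obtain hga' | hgT := ha g⁻¹ (inv_mem hg)
    · simpa [mul_assoc] using mul_mem hga (inv_mem hga')
    · exact mul_mem (inv_mem_iff.1 hgT) (inv_mem_iff.1 hgT)
  · exact mul_mem hgT hgT

theorem mul_self_eq_one_of_commute (hP : IsToralPartition P) (hT : T ∈ P) {g h : G} (hg : g ≠ 1)
    (hgT : g ∈ T) (hhT : h ∉ T) (hgh : Commute g h) : h * h = 1 := by
  have hhh : h * h ∈ T :=
    hP.mul_self_mem_of_mem_normalizer hT <| hP.mem_normalizer_of_commute hT hg hgT hgh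
  obtain ⟨S, hS, hhS⟩ := hP.exists_mem h fun h1 ↦ hhT (h1 ▸ one_mem T)
  by_contra hne
  exact hhT (hP.eq_of_mem S hS T hT _ hne (mul_mem hhS hhS) hhh ▸ hhS)

theorem conj_eq_self_of_conj_mem (hP : IsToralPartition P)
    (hT : T ∈ P) (hTn : normalizer (T : Set G) = T) {g k : G} (hgT : g ∈ T)
    (hk : k * g * k⁻¹ ∈ T) : k * g * k⁻¹ = g := by
  obtain rfl | hg := eq_or_ne g 1
  · simp
  · rw [mul_inv_eq_iff_eq_mul]
    exact (hP.commute T hT g hgT k (hTn ▸ hP.mem_normalizer hT hg hgT hk)).symm.eq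

theorem ncard_conjugatesOf [Finite G] (hP : IsToralPartition P)
    (hT : T ∈ P) (hTn : normalizer (T : Set G) = T) (ht : t ∈ T) (ht1 : t ≠ 1) :
    (conjugatesOf t).ncard = T.index := by
  have hsub : conjugatesOf t ⊆ conjugatesOfSet T := fun w hw ↦ mem_conjugatesOfSet_iff.2 ⟨t, ht, hw⟩
  have hinter : conjugatesOf t ∩ T = {t} := by
    refine Set.eq_singleton_iff_unique_mem.2 ⟨⟨mem_conjugatesOf_self, ht⟩, ?_⟩
    rintro _ ⟨hw, hwT⟩
    obtain ⟨k, rfl⟩ := isConj_iff.1 hw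
    exact hP.conj_eq_self_of_conj_mem hT hTn ht hwT
  have := hP.ncard_inter_conjugatesOfSet hT (A := conjugatesOf t)
    (fun k g hg ↦ (IsConj.trans (b := g) hg (isConj_iff.2 ⟨k, rfl⟩)))
    (fun h ↦ ht1 (isConj_one_right.1 h.symm))
  rwa [hTn, Set.inter_eq_left.2 hsub, hinter, Set.ncard_singleton, mul_one] at this

theorem mul_conj_notMem_conjugatesOfSet (hP : IsToralPartition P)
    (hT : T ∈ P) (hTn : normalizer (T : Set G) = T) (ht : t ∈ T) (htt : t * t = 1)
    {w : G} (hw : IsConj t w) (htw : t * w ≠ 1) : t * w ∉ conjugatesOfSet (T : Set G) := by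
  intro hmem
  obtain ⟨l, rfl⟩ := isConj_iff.1 hw
  obtain ⟨k, hk⟩ := mem_conjugatesOfSet_iff_exists_conj_mem.1 hmem
  have ht1 : t ≠ 1 := by rintro rfl; simp at htw
  have mem_of_conj_mem {g : G} (hg : g * t * g⁻¹ ∈ T) : g ∈ T :=
    hTn ▸ hP.mem_normalizer hT ht1 ht hg
  set a := k * t * k⁻¹
  set b := (k * l) * t * (k * l)⁻¹
  have hab : k * (t * (l * t * l⁻¹)) * k⁻¹ = a * b := by simp [a, b, mul_assoc]
  have hab1 : a * b ≠ 1 := by simpa [← hab] using htw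
  have ha : a * a = 1 := conj_mul_conj_eq_one htt k
  have hb : b * b = 1 := conj_mul_conj_eq_one htt (k * l)
  rw [hab, SetLike.mem_coe] at hk
  have haT : a ∈ T := hTn ▸ hP.mem_normalizer_of_mul_mem hT ha hb hab1 hk
  have hkT : k ∈ T := mem_of_conj_mem haT
  have hlT : l ∈ T :=
    (mul_mem_cancel_left hkT).1 (mem_of_conj_mem ((mul_mem_cancel_left haT).1 hk))
  rw [(hP.commute T hT l hlT t ht).eq, mul_inv_cancel_right] at htw
  exact htw htt

theorem image_mul_conjugatesOf_eq [Finite G] (hP : IsToralPartition P) (hT : T ∈ P)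
    (hTn : normalizer (T : Set G) = T) (hN : N.index = 2) (ht : t ∈ T) (htN : t ∉ N)
    (htt : t * t = 1) :
    (t * ·) '' conjugatesOf t = (N : Set G) \ (conjugatesOfSet T \ {1}) := by
  have ht1 : t ≠ 1 := fun h ↦ htN (h ▸ one_mem N)
  refine Set.eq_of_subset_of_ncard_le ?_ ?_
  · rintro _ ⟨w, hw, rfl⟩
    have hwN : w ∉ N := by
      obtain ⟨k, rfl⟩ := isConj_iff.1 hw
      rwa [conj_mem_iff_of_index_two hN]
    exact ⟨by simp [mul_mem_iff_of_index_two hN, htN, hwN],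
      fun h ↦ hP.mul_conj_notMem_conjugatesOfSet hT hTn ht htt hw h.2 h.1⟩
  · rw [Set.ncard_image_of_injective _ (mul_right_injective t),
      hP.ncard_conjugatesOf hT hTn ht ht1, hP.ncard_sdiff_conjugatesOfSet hT hTn hN ht htN]

theorem exists_normal_of_normalizer_eq [Finite G] (hP : IsToralPartition P) (hT : T ∈ P)
    (hTn : normalizer (T : Set G) = T) (hN : N.index = 2) (ht : t ∈ T) (htN : t ∉ N)
    (htt : t * t = 1) : ∃ S ∈ P, S.Normal := by
  set V : Set G := (N : Set G) \ (conjugatesOfSet T \ {1}) with hV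
  have ht1 : t ≠ 1 := fun h ↦ htN (h ▸ one_mem N)
  have himage : (t * ·) '' conjugatesOf t = V :=
    hP.image_mul_conjugatesOf_eq hT hTn hN ht htN htt
  have conj_mem {k v : G} (hv : v ∈ V) : k * v * k⁻¹ ∈ V :=
    ⟨(conj_mem_iff_of_index_two hN).2 hv.1, fun h ↦ hv.2 ⟨conj_mem_conjugatesOfSet_iff.1 h.1,
      by simpa using h.2⟩⟩
  obtain hx | hne := Set.eq_singleton_or_nontrivial (show 1 ∈ V from ⟨one_mem N, by simp⟩)
  · have hindex : T.index = 1 := by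
      rw [← hP.ncard_sdiff_conjugatesOfSet hT hTn hN ht htN, ← hV, hx, Set.ncard_singleton]
    exact ⟨T, hT, by rw [index_eq_one.1 hindex]; infer_instance⟩
  obtain ⟨m, hm, hm1⟩ := hne.exists_ne 1
  obtain ⟨S, hS, hmS⟩ := hP.exists_mem m hm1
  have hmm : m * m ≠ 1 := by
    intro h
    have hmT : m ∈ T := hTn ▸ hP.mem_normalizer_of_commute hT ht1 ht <| by
      rw [commute_iff_eq, ← mul_inv_eq_iff_eq_mul,
        conj_eq_inv_of_mem_image htt (himage ▸ hm), inv_eq_of_mul_eq_one_left h]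
    exact hm.2 ⟨subset_conjugatesOfSet hmT, hm1⟩
  refine ⟨S, hS, hP.normal_of_forall_conj_mem hS hm1 fun k ↦ ?_⟩
  by_contra hkS
  have := hP.mul_self_eq_one_of_commute hS hm1 hmS hkS <| commute_of_mem_image htt
    (fun k v hv ↦ himage ▸ conj_mem (himage ▸ hv)) (himage ▸ hm) (himage ▸ conj_mem hm)
  exact hmm <| by rwa [conj_mul, conj_eq_one_iff] at this

end IsToralPartition

theorem two_mul_ncard_of_index_two {N : Subgroup G} (hN : N.index = 2) :
    2 * (N : Set G).ncard = Nat.card G := by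
  rw [← N.card_mul_index, hN, mul_comm, ← Nat.card_coe_set_eq]
  rfl

theorem three_le_ncard_compl_inter [Finite G] {N : Subgroup G} (hN : N.index = 2)
    {H : Subgroup G} {s : G} (hs : s ∈ H) (hsN : s ∉ N) (hs2 : s ^ 2 ≠ 1) (hs4 : s ^ 4 ≠ 1) :
    3 ≤ ((N : Set G)ᶜ ∩ H).ncard := by
  have hcard := two_mul_ncard_compl_inter_of_index_two hN hs hsN
  have hpow : s ^ (2 * ((N : Set G)ᶜ ∩ H).ncard) = 1 :=
    orderOf_dvd_iff_pow_eq_one.1 (hcard ▸ H.orderOf_dvd_natCard hs)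
  have := Nat.card_pos (α := H)
  by_contra! hlt
  obtain h | h : ((N : Set G)ᶜ ∩ H).ncard = 1 ∨ ((N : Set G)ᶜ ∩ H).ncard = 2 := by omega
  · exact hs2 (by simpa [h] using hpow)
  · exact hs4 (by simpa [h] using hpow)

theorem index_eq_one_of_card_eq {g x x' b b' v c : ℕ} (hg : 0 < g) (hx : 4 * (b * x) = g)
    (hb : 3 ≤ b) (hx' : 4 * (b' * x') = g) (hc : 2 ≤ c) (hv : v * c = g ∨ 2 * (v * c) = g)
    (heq : v * (c - 1) + 1 = x + x') : x = 1 := by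
  have hbx : 3 * x ≤ b * x := Nat.mul_le_mul_right x hb
  have hvc : v * c = v * (c - 1) + v := by rw [← Nat.mul_add_one]; congr; omega
  have hc' : v ≤ v * (c - 1) := Nat.le_mul_of_pos_right v (by omega)
  have hb'1 : b' * x' = x' ∨ 2 * x' ≤ b' * x' := by
    obtain rfl | rfl | hb' : b' = 0 ∨ b' = 1 ∨ 2 ≤ b' := by omega
    · omega
    · simp
    · exact Or.inr (Nat.mul_le_mul_right x' hb')
  obtain rfl | hc3 := hc.eq_or_lt
  · omega
  · have : v * 2 ≤ v * (c - 1) := Nat.mul_le_mul_left v (by omega)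
    omega

namespace IsNormalPartition

variable {P : Set (Subgroup G)} {N S T : Subgroup G}

theorem notMem_conjugatesOfSet (hP : IsNormalPartition P) (hS : S ∈ P) (hT : T ∈ P) {s g : G}
    (hs : s ∈ S) (hsT : s ∉ conjugatesOfSet (T : Set G)) (hg : g ≠ 1)
    (hgS : g ∈ conjugatesOfSet (S : Set G)) : g ∉ conjugatesOfSet (T : Set G) := by
  obtain ⟨k, hk⟩ := mem_conjugatesOfSet_iff_exists_conj_mem.1 hgS
  exact fun h ↦ hsT <| hP.mem_conjugatesOfSet_of_mem hS hT (by simpa using hg) hk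
    (conj_mem_conjugatesOfSet_iff.2 h) hs

theorem ncard_inter_add_ncard_inter_add_ncard_sdiff [Finite G] (hP : IsNormalPartition P)
    (hS : S ∈ P) (hT : T ∈ P) {s : G} (hs : s ∈ S) (hsT : s ∉ conjugatesOfSet (T : Set G))
    {A : Set G} (h1 : 1 ∉ A) :
    (A ∩ conjugatesOfSet S).ncard + (A ∩ conjugatesOfSet T).ncard +
      ((A \ conjugatesOfSet S) \ conjugatesOfSet T).ncard = A.ncard := by
  have hinter : (A \ conjugatesOfSet S) ∩ conjugatesOfSet T = A ∩ conjugatesOfSet T := by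
    ext g
    refine ⟨fun h ↦ ⟨h.1.1, h.2⟩, fun h ↦ ⟨⟨h.1, fun hgS ↦ ?_⟩, h.2⟩⟩
    exact hP.notMem_conjugatesOfSet hS hT hs hsT (fun hg ↦ h1 (hg ▸ h.1)) hgS h.2
  rw [← hinter, add_assoc, Set.ncard_inter_add_ncard_sdiff_eq_ncard,
    Set.ncard_inter_add_ncard_sdiff_eq_ncard]

theorem ncard_inter_conjugatesOfSet_of_subset [Finite G] (hP : IsNormalPartition P) (hT : T ∈ P)
    {A : Set G} (hA : ∀ k, ∀ g ∈ A, k * g * k⁻¹ ∈ A) (h1 : 1 ∉ A) (hTA : (T : Set G) \ {1} ⊆ A) :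
    (A ∩ conjugatesOfSet T).ncard = (normalizer (T : Set G)).index * (Nat.card T - 1) := by
  have hinter : A ∩ T = (T : Set G) \ {1} := by
    ext g
    exact ⟨fun h ↦ ⟨h.2, fun hg ↦ h1 (hg ▸ h.1)⟩, fun h ↦ ⟨hTA h, h.1⟩⟩
  rw [hP.ncard_inter_conjugatesOfSet hT hA h1, hinter, Set.ncard_sdiff_singleton_of_mem (one_mem T),
    ← Nat.card_coe_set_eq]
  rfl

theorem sdiff_singleton_subset (hP : IsNormalPartition P) {R : Subgroup G} (hR : R ∈ P)
    (hS : S ∈ P) (hT : T ∈ P) (hN : (N : Set G)ᶜ ⊆ conjugatesOfSet (S : Set G) ∪ conjugatesOfSet T)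
    {u : G} (huR : u ∈ R)
    (hu : u ∈ (((N : Set G) \ {1}) \ conjugatesOfSet S) \ conjugatesOfSet T) :
    (R : Set G) \ {1} ⊆ (((N : Set G) \ {1}) \ conjugatesOfSet S) \ conjugatesOfSet T := by
  rintro r ⟨hrR, hr1⟩
  have hrS : r ∉ conjugatesOfSet (S : Set G) := fun h ↦
    hu.1.2 (hP.mem_conjugatesOfSet_of_mem hR hS hr1 hrR h huR)
  have hrT : r ∉ conjugatesOfSet (T : Set G) := fun h ↦
    hu.2 (hP.mem_conjugatesOfSet_of_mem hR hT hr1 hrR h huR)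
  have hrN : r ∈ N := by_contra fun h ↦ (hN h).elim hrS hrT
  exact ⟨⟨⟨hrN, hr1⟩, hrS⟩, hrT⟩

end IsNormalPartition

namespace IsToralPartition

variable {P : Set (Subgroup G)} {N S T : Subgroup G}

theorem normalizer_eq_or_card (hP : IsToralPartition P) (hT : T ∈ P) :
    (normalizer (T : Set G) = T ∧ (normalizer (T : Set G)).index * Nat.card T = Nat.card G) ∨
      2 * ((normalizer (T : Set G)).index * Nat.card T) = Nat.card G := by
  have hle : T ≤ normalizer (T : Set G) := le_normalizer
  obtain h | h := (Nat.dvd_prime Nat.prime_two).1 (hP.relIndex_normalizer_dvd_two T hT)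
  · have hTn : normalizer (T : Set G) = T := le_antisymm (relIndex_eq_one.1 h) hle
    exact Or.inl ⟨hTn, by rw [hTn, index_mul_card]⟩
  · refine Or.inr ?_
    rw [← T.card_mul_index, ← relIndex_mul_index hle, h]
    ring

theorem card_le_four_mul (hP : IsToralPartition P) (hT : T ∈ P) (hT2 : 2 ≤ Nat.card T) :
    Nat.card G ≤ 4 * ((normalizer (T : Set G)).index * (Nat.card T - 1)) := by
  have hle : (normalizer (T : Set G)).index * Nat.card T ≤
      2 * ((normalizer (T : Set G)).index * (Nat.card T - 1)) := by
    rw [mul_left_comm]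
    exact Nat.mul_le_mul_left _ (by omega)
  have := hP.normalizer_eq_or_card hT
  omega

theorem four_mul_ncard_compl_inter_mul_index [Finite G] (hP : IsToralPartition P)
    (hT : T ∈ P) (hTn : normalizer (T : Set G) ≠ T) (hN : N.index = 2) {t : G} (ht : t ∈ T)
    (htN : t ∉ N) :
    4 * (((N : Set G)ᶜ ∩ T).ncard * (normalizer (T : Set G)).index) = Nat.card G := by
  rw [← (hP.normalizer_eq_or_card hT).resolve_left fun h ↦ hTn h.1,
    ← two_mul_ncard_compl_inter_of_index_two hN ht htN]
  ring

theorem four_mul_ncard_compl_inter_conjugatesOfSet [Finite G] (hP : IsToralPartition P)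
    (hT : T ∈ P) (hTn : normalizer (T : Set G) ≠ T) (hN : N.index = 2) {t : G} (ht : t ∈ T)
    (htN : t ∉ N) : 4 * ((N : Set G)ᶜ ∩ conjugatesOfSet T).ncard = Nat.card G := by
  have h₁ := hP.two_mul_ncard_compl_inter_conjugatesOfSet hT hN ht htN
  have h₂ := (hP.normalizer_eq_or_card hT).resolve_left fun h ↦ hTn h.1
  omega

theorem ncard_sdiff_sdiff_add_one [Finite G] (hP : IsToralPartition P) (hS : S ∈ P)
    (hSn : normalizer (S : Set G) ≠ S) (hT : T ∈ P) (hTn : normalizer (T : Set G) ≠ T)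
    (hN : N.index = 2) {s t : G} (hs : s ∈ S) (hsN : s ∉ N) (ht : t ∈ T) (htN : t ∉ N)
    (hsT : s ∉ conjugatesOfSet (T : Set G)) :
    ((((N : Set G) \ {1}) \ conjugatesOfSet S) \ conjugatesOfSet T).ncard + 1 =
      (normalizer (S : Set G)).index + (normalizer (T : Set G)).index := by
  have hS₁ := hP.four_mul_ncard_compl_inter_conjugatesOfSet hS hSn hN hs hsN
  have hT₁ := hP.four_mul_ncard_compl_inter_conjugatesOfSet hT hTn hN ht htN
  have hS₂ := hP.ncard_compl_inter_conjugatesOfSet_eq_add hS hN hs hsN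
  have hT₂ := hP.ncard_compl_inter_conjugatesOfSet_eq_add hT hN ht htN
  have h₁ := hP.ncard_inter_add_ncard_inter_add_ncard_sdiff hS hT hs hsT
    (A := (N : Set G) \ {1}) (by simp)
  have h₂ := two_mul_ncard_of_index_two hN
  have h₃ := Set.ncard_sdiff_singleton_add_one (one_mem N : (1 : G) ∈ (N : Set G))
  omega

theorem compl_subset_union [Finite G] (hP : IsToralPartition P) (hS : S ∈ P)
    (hSn : normalizer (S : Set G) ≠ S) (hT : T ∈ P) (hTn : normalizer (T : Set G) ≠ T)
    (hN : N.index = 2) {s t : G} (hs : s ∈ S) (hsN : s ∉ N) (ht : t ∈ T) (htN : t ∉ N)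
    (hsT : s ∉ conjugatesOfSet (T : Set G)) :
    (N : Set G)ᶜ ⊆ conjugatesOfSet (S : Set G) ∪ conjugatesOfSet T := by
  have hS₁ := hP.four_mul_ncard_compl_inter_conjugatesOfSet hS hSn hN hs hsN
  have hT₁ := hP.four_mul_ncard_compl_inter_conjugatesOfSet hT hTn hN ht htN
  have h₁ := hP.ncard_inter_add_ncard_inter_add_ncard_sdiff hS hT hs hsT
    (A := (N : Set G)ᶜ) (by simp)
  have h₂ := two_mul_ncard_of_index_two hN
  have h₃ := Set.ncard_add_ncard_compl (N : Set G)
  rw [← Set.sdiff_eq_empty, ← Set.sdiff_sdiff, ← Set.ncard_eq_zero]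
  omega

theorem subset_conjugatesOfSet_of_ncard_lt [Finite G] (hP : IsToralPartition P) {A : Set G}
    (hA : ∀ k, ∀ g ∈ A, k * g * k⁻¹ ∈ A) (h1 : 1 ∉ A)
    (hsub : ∀ T ∈ P, ∀ g ∈ T, g ∈ A → (T : Set G) \ {1} ⊆ A) (hcard : 2 * A.ncard < Nat.card G)
    (hT : T ∈ P) {g : G} (hg : g ∈ T) (hgA : g ∈ A) : A ⊆ conjugatesOfSet (T : Set G) := by
  have card_le {R : Subgroup G} (hR : R ∈ P) {h : G} (hh : h ∈ R) (hhA : h ∈ A) :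
      Nat.card G ≤ 4 * (A ∩ conjugatesOfSet R).ncard := by
    rw [hP.ncard_inter_conjugatesOfSet_of_subset hR hA h1 (hsub R hR h hh hhA)]
    exact hP.card_le_four_mul hR ((one_lt_card_iff_ne_bot R).2 (hP.ne_bot R hR))
  intro h hhA
  by_contra hhT
  obtain ⟨R, hR, hhR⟩ := hP.exists_mem h fun hh ↦ h1 (hh ▸ hhA)
  have hR₁ := card_le hR hhR hhA
  have hT₁ := card_le hT hg hgA
  have := hP.ncard_inter_add_ncard_inter_add_ncard_sdiff hR hT hhR hhT h1
  omega

theorem exists_notMem_conjugatesOfSet [Finite G] (hP : IsToralPartition P) (hN : N.index = 2)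
    (hT : T ∈ P) (hTn : normalizer (T : Set G) ≠ T) {t : G} (ht : t ∈ T) (htN : t ∉ N) :
    ∃ s ∉ N, s ∉ conjugatesOfSet (T : Set G) := by
  by_contra! h
  have h₁ := hP.four_mul_ncard_compl_inter_conjugatesOfSet hT hTn hN ht htN
  have h₂ := two_mul_ncard_of_index_two hN
  have h₃ := Set.ncard_add_ncard_compl (N : Set G)
  rw [Set.inter_eq_left.2 (show (N : Set G)ᶜ ⊆ conjugatesOfSet T from h)] at h₁
  have := Nat.card_pos (α := G)
  omega

/- The set `U` of nontrivial elements of `N` outside the conjugates of `S` and `T` has too few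
elements to meet two classes of members of `P`, hence consists of one class; this determines the
number of conjugates of `T`. -/
theorem index_normalizer_eq_one [Finite G] (hP : IsToralPartition P) (hS : S ∈ P)
    (hSn : normalizer (S : Set G) ≠ S) (hT : T ∈ P) (hTn : normalizer (T : Set G) ≠ T)
    (hN : N.index = 2) {s t : G} (hs : s ∈ S) (hsN : s ∉ N) (ht : t ∈ T) (htN : t ∉ N)
    (hsT : s ∉ conjugatesOfSet (T : Set G)) (ht2 : t ^ 2 ≠ 1) (ht4 : t ^ 4 ≠ 1) :
    (normalizer (T : Set G)).index = 1 := by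
  set U := (((N : Set G) \ {1}) \ conjugatesOfSet S) \ conjugatesOfSet T with hU
  have hUcard : U.ncard + 1 = _ := hP.ncard_sdiff_sdiff_add_one hS hSn hT hTn hN hs hsN ht htN hsT
  have hcover := hP.compl_subset_union hS hSn hT hTn hN hs hsN ht htN hsT
  have hU1 : 1 ∉ U := by simp [hU]
  have hUconj (k g : G) (hg : g ∈ U) : k * g * k⁻¹ ∈ U := by
    simpa [hU, conj_mem_conjugatesOfSet_iff, conj_mem_iff_of_index_two hN] using hg
  have hUsub (R) (hR : R ∈ P) (g) (hg : g ∈ R) (hgU : g ∈ U) : (R : Set G) \ {1} ⊆ U :=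
    hP.sdiff_singleton_subset hR hS hT hcover hg hgU
  have hTx := hP.four_mul_ncard_compl_inter_mul_index hT hTn hN ht htN
  have hSx := hP.four_mul_ncard_compl_inter_mul_index hS hSn hN hs hsN
  set x := (normalizer (T : Set G)).index
  set x' := (normalizer (S : Set G)).index
  set b := ((N : Set G)ᶜ ∩ T).ncard
  set b' := ((N : Set G)ᶜ ∩ S).ncard
  have hb : 3 ≤ b := three_le_ncard_compl_inter hN ht htN ht2 ht4
  have hx : 0 < x := Nat.pos_of_ne_zero FiniteIndex.index_ne_zero
  have hx' : 0 < x' := Nat.pos_of_ne_zero FiniteIndex.index_ne_zero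
  obtain ⟨u, hu⟩ : U.Nonempty := Set.nonempty_of_ncard_ne_zero (by omega)
  obtain ⟨R, hR, huR⟩ := hP.exists_mem u (fun h ↦ hU1 (h ▸ hu))
  have hG : 0 < Nat.card G := Nat.card_pos
  have hlt : 2 * U.ncard < Nat.card G := by
    have hbx : 3 * x ≤ b * x := Nat.mul_le_mul_right x hb
    have hb'x' : x' ≤ b' * x' := Nat.le_mul_of_pos_left x' (pos_of_mul_pos_left (by omega) hx'.le)
    omega
  have hUR := hP.subset_conjugatesOfSet_of_ncard_lt hUconj hU1 hUsub hlt hR huR hu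
  have hR₁ := hP.ncard_inter_conjugatesOfSet_of_subset hR hUconj hU1 (hUsub R hR u huR hu)
  rw [Set.inter_eq_left.2 hUR] at hR₁
  exact index_eq_one_of_card_eq hG hTx hb hSx ((one_lt_card_iff_ne_bot R).2 (hP.ne_bot R hR))
    ((hP.normalizer_eq_or_card hR).imp_left And.right) (by omega)

theorem exists_normal [Finite G] (hP : IsToralPartition P) (hN : N.index = 2) {t : G}
    (htN : t ∉ N) (htt : t * t = 1) (h4 : ∀ s ∉ N, s ^ 4 = 1 → s ^ 2 = 1) :
    ∃ T ∈ P, T.Normal := by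
  by_cases hn : ∃ T ∈ P, normalizer (T : Set G) = T ∧ ∃ s ∈ T, s ∉ N
  · obtain ⟨T, hT, hTn, s, hsT, hsN⟩ := hn
    obtain ⟨k, hk⟩ := mem_conjugatesOfSet_iff_exists_conj_mem.1 <|
      hP.compl_subset_conjugatesOfSet hT hTn hN hsT hsN htN
    exact hP.exists_normal_of_normalizer_eq hT hTn hN hk
      (by rwa [conj_mem_iff_of_index_two hN]) (conj_mul_conj_eq_one htt k)
  push Not at hn
  by_cases hinv : ∀ s ∉ N, s * s = 1
  · exact hP.exists_normal_of_forall_mul_self_eq_one hN hinv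
  push Not at hinv
  obtain ⟨s, hsN, hss⟩ := hinv
  rw [← sq] at hss
  obtain ⟨T, hT, hsT⟩ := hP.exists_mem s fun h ↦ hsN (h ▸ one_mem N)
  have hTn : normalizer (T : Set G) ≠ T := fun h ↦ hsN (hn T hT h s hsT)
  obtain ⟨r, hrN, hrT⟩ := hP.exists_notMem_conjugatesOfSet hN hT hTn hsT hsN
  obtain ⟨S, hS, hrS⟩ := hP.exists_mem r fun h ↦ hrN (h ▸ one_mem N)
  have hSn : normalizer (S : Set G) ≠ S := fun h ↦ hrN (hn S hS h r hrS)
  have := hP.index_normalizer_eq_one hS hSn hT hTn hN hrS hrN hsT hsN hrT hss (mt (h4 s hsN) hss)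
  exact ⟨T, hT, normalizer_eq_top_iff.1 (index_eq_one.1 this)⟩

end IsToralPartition

end NormalPartition

section Group

open Subgroup

variable {G : Type*} [Group G]

/- The Frattini argument for a Sylow `p`-subgroup `P` of `N` gives `x ∉ N` normalizing `P`, and `v`
is taken in the center of `P`. -/
theorem exists_notMem_commute_conj [Finite G] {N : Subgroup G} [N.Normal] (hN : N ≠ ⊤)
    {p : ℕ} [Fact p.Prime] (hp : p ∣ Nat.card N) :
    ∃ x ∉ N, ∃ v, orderOf v = p ∧ Commute v (x * v * x⁻¹) := by
  obtain ⟨P⟩ : Nonempty (Sylow p N) := inferInstance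
  obtain ⟨x, hxP, hxN⟩ : ∃ x ∈ normalizer (map N.subtype P : Set G), x ∉ N := by
    refine SetLike.not_le_iff_exists.1 fun hle ↦ hN ?_
    rw [← P.normalizer_sup_eq_top, sup_eq_right.2 hle]
  have : Nontrivial (P : Subgroup N) :=
    (nontrivial_iff_ne_bot _).2 (P.ne_bot_of_dvd_card hp)
  have := P.isPGroup'.center_nontrivial
  have hdvd : p ∣ Nat.card (center P) := by
    obtain ⟨n, hn, hcard⟩ :=
      (P.isPGroup'.to_subgroup (center (P : Subgroup N))).nontrivial_iff_card.1 inferInstance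
    exact hcard ▸ dvd_pow_self p hn.ne'
  obtain ⟨c, hc⟩ := exists_prime_orderOf_dvd_card' p hdvd
  let f : P →* G := N.subtype.comp (P : Subgroup N).subtype
  have hf : Function.Injective f := N.subtype_injective.comp (P : Subgroup N).subtype_injective
  refine ⟨x, hxN, f c, ?_, ?_⟩
  · rw [orderOf_injective f hf, orderOf_submonoid, hc]
  · obtain ⟨y, hy, hyx⟩ := (mem_normalizer_iff.1 hxP (f c)).1 ⟨_, c.1.2, rfl⟩
    rw [← hyx]
    exact (Commute.symm (mem_center_iff.1 c.2 ⟨y, hy⟩)).map f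

theorem index_subgroupOf_eq_two {N K : Subgroup G} (hN : N.index = 2) {t : G}
    (htK : t ∈ K) (htN : t ∉ N) : (N.subgroupOf K).index = 2 := by
  have := normal_of_index_eq_two hN
  refine ((Nat.dvd_prime Nat.prime_two).1 (hN ▸ relIndex_dvd_index_of_normal N K)).resolve_left ?_
  exact fun h ↦ htN (relIndex_eq_one.1 h htK)

theorem mem_of_pow_eq_one_of_index_two {N : Subgroup G} (hN : N.index = 2) {m : ℕ}
    (hm : Odd m) {g : G} (hg : g ^ m = 1) : g ∈ N := by
  obtain ⟨k, rfl⟩ := hm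
  rw [pow_succ, pow_mul, sq] at hg
  exact (mul_mem_cancel_left (pow_mem (mul_self_mem_of_index_two hN g) k)).1 (hg ▸ one_mem N)

theorem eq_one_or_eq_of_mem_zpowers {t z : G} (htt : t * t = 1) (hz : z ∈ zpowers t) :
    z = 1 ∨ z = t := by
  obtain ⟨k, rfl⟩ := mem_zpowers_iff.1 hz
  obtain ⟨m, rfl⟩ | ⟨m, rfl⟩ := k.even_or_odd
  · rw [_root_.zpow_add, ← (Commute.refl t).mul_zpow, htt, _root_.one_zpow]
    exact .inl rfl
  · rw [_root_.zpow_add_one, _root_.zpow_mul, zpow_two, htt, _root_.one_zpow, one_mul]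
    exact .inr rfl

end Group

section FiniteField

variable {F : Type*} [Field F]

theorem isSquare_mul_of_not_isSquare [Finite F] {a b : F} (ha : ¬ IsSquare a)
    (hb : ¬ IsSquare b) : IsSquare (a * b) := by
  classical
  have := Fintype.ofFinite F
  have ha0 : a ≠ 0 := fun h ↦ ha (h ▸ IsSquare.zero)
  have hb0 : b ≠ 0 := fun h ↦ hb (h ▸ IsSquare.zero)
  have hchar : ringChar F ≠ 2 := fun h ↦ ha (FiniteField.isSquare_of_char_two h a)
  rw [← quadraticChar_neg_one_iff_not_isSquare] at ha hb
  rw [← quadraticChar_one_iff_isSquare (mul_ne_zero ha0 hb0), map_mul, ha, hb, neg_one_mul,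
    neg_neg]

variable [Fintype F]

/- With `q = r ^ 2`, raising to the power `(q - 1) / 2 = (r - 1) * ((r + 1) / 2)` kills `y`. -/
theorem isSquare_of_pow_eq_self {r : ℕ} (hr : Fintype.card F = r ^ 2) {y : F} (hy : y ^ r = y) :
    IsSquare y := by
  by_cases hchar : ringChar F = 2
  · exact FiniteField.isSquare_of_char_two hchar y
  by_cases hy0 : y = 0
  · exact hy0 ▸ IsSquare.zero
  obtain ⟨k, hk⟩ : Odd r := (Nat.odd_pow_iff two_ne_zero).1
    (hr ▸ Nat.odd_iff.2 (FiniteField.odd_card_of_char_ne_two hchar))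
  have hpow : y ^ (2 * k) = 1 := by
    rw [hk, pow_succ] at hy
    exact mul_right_cancel₀ hy0 (by rw [hy, one_mul])
  have hcard : Fintype.card F / 2 = 2 * k * (k + 1) := by
    rw [hr, hk, show (2 * k + 1) ^ 2 = 2 * (2 * k * (k + 1)) + 1 by ring]
    lia
  rw [FiniteField.isSquare_iff hchar hy0, hcard, pow_mul, hpow, one_pow]

/- A proper subfield lies in the unique subfield of index two, whose elements are squares. -/
theorem subring_eq_top_of_not_isSquare_mem {p n : ℕ} (hp : p.Prime)
    (hF : Fintype.card F = p ^ 2 ^ n) {S : Subring F} {y : F} (hy : ¬ IsSquare y) (hyS : y ∈ S) :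
    S = ⊤ := by
  classical
  let : Field S := Fintype.fieldOfDomain S
  have hSF : Fintype.card F = Fintype.card S ^ Module.finrank S F := Module.card_eq_pow_finrank
  obtain ⟨d, -, hd⟩ := (Nat.dvd_prime_pow hp).1
    (hF ▸ hSF ▸ dvd_pow_self _ Module.finrank_pos.ne' : Fintype.card S ∣ p ^ 2 ^ n)
  have hdm : d * Module.finrank S F = 2 ^ n := by
    rw [hF, hd, ← pow_mul] at hSF
    exact (Nat.pow_right_injective hp.two_le hSF).symm
  obtain ⟨e, -, he⟩ := (Nat.dvd_prime_pow Nat.prime_two).1 (Dvd.intro_left d hdm)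
  cases e with
  | zero =>
    rw [he, pow_zero, pow_one] at hSF
    exact SetLike.coe_injective (Set.eq_of_subset_of_card_le (Set.subset_univ _)
      (by simpa using hSF.le))
  | succ e =>
    refine absurd (isSquare_of_pow_eq_self (r := Fintype.card S ^ 2 ^ e) ?_ ?_) hy
    · rw [hSF, he, pow_succ 2 e, pow_mul]
    · exact congr_arg Subtype.val (FiniteField.pow_card_pow (K := S) (2 ^ e) ⟨y, hyS⟩)

theorem isSquare_intCast_of_card_eq {p n : ℕ} [Fact p.Prime] (hn : n ≠ 0)
    (hF : Fintype.card F = p ^ 2 ^ n) (m : ℤ) : IsSquare (m : F) := by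
  have : CharP F p := charP_of_card_eq_prime_pow hF
  obtain ⟨k, rfl⟩ := Nat.exists_eq_succ_of_ne_zero hn
  refine isSquare_of_pow_eq_self (r := p ^ 2 ^ k) (by rw [hF, pow_succ, pow_mul]) ?_
  exact map_intCast (iterateFrobenius F p (2 ^ k)) m

/- The multipliers of `M` form a subring. -/
theorem addSubgroup_eq_top_of_not_isSquare_mul_mem {p n : ℕ} (hp : p.Prime)
    (hF : Fintype.card F = p ^ 2 ^ n) {M : AddSubgroup F} (h1 : 1 ∈ M) {y : F} (hy : ¬ IsSquare y)
    (hM : ∀ m ∈ M, y * m ∈ M) : M = ⊤ := by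
  have htop : Subring.closure {y} = ⊤ :=
    subring_eq_top_of_not_isSquare_mem hp hF hy (Subring.mem_closure_of_mem rfl)
  have hmul (x : F) : ∀ m ∈ M, x * m ∈ M := by
    have hx : x ∈ Subring.closure {y} := htop ▸ Subring.mem_top x
    induction hx using Subring.closure_induction with
    | mem z hz => exact (Set.mem_singleton_iff.1 hz) ▸ hM
    | zero => simp
    | one => simp
    | add a b _ _ ha hb => exact fun m hm ↦ add_mul a b m ▸ add_mem (ha m hm) (hb m hm)
    | neg a _ ha => exact fun m hm ↦ neg_mul a m ▸ neg_mem (ha m hm)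
    | mul a b _ _ ha hb => exact fun m hm ↦ mul_assoc a b m ▸ ha _ (hb m hm)
  exact eq_top_iff.2 fun x _ ↦ mul_one x ▸ hmul x 1 h1

end FiniteField

theorem four_ne_zero_of_neZero_two {R : Type*} [Semiring R] [NoZeroDivisors R] [NeZero (2 : R)] :
    (4 : R) ≠ 0 := by
  rw [show (4 : R) = 2 * 2 by norm_num]
  exact mul_ne_zero two_ne_zero two_ne_zero

theorem odd_of_charP (R : Type*) [NonAssocSemiring R] [NeZero (2 : R)] (p : ℕ) [Fact p.Prime]
    [CharP R p] : Odd p :=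
  (Fact.out : p.Prime).odd_of_ne_two fun h ↦
    two_ne_zero (α := R) (by exact_mod_cast h ▸ CharP.cast_eq_zero R p)

theorem exists_eq_scalar_add_smul_of_commute {F : Type*} [Field F]
    {A B : Matrix (Fin 2) (Fin 2) F} (hA : A ∉ Set.range (scalar (Fin 2))) (hAB : Commute A B) :
    ∃ x y : F, B = scalar (Fin 2) x + y • A := by
  have h01 : A 0 1 * B 1 0 = B 0 1 * A 1 0 := by
    have := congr_fun₂ hAB.eq 0 0
    simp only [mul_apply, Fin.sum_univ_two] at this
    linear_combination this
  have h02 : (A 0 0 - A 1 1) * B 0 1 = (B 0 0 - B 1 1) * A 0 1 := by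
    have := congr_fun₂ hAB.eq 0 1
    simp only [mul_apply, Fin.sum_univ_two] at this
    linear_combination this
  have h10 : (A 0 0 - A 1 1) * B 1 0 = (B 0 0 - B 1 1) * A 1 0 := by
    have := congr_fun₂ hAB.eq 1 0
    simp only [mul_apply, Fin.sum_univ_two] at this
    linear_combination -this
  suffices h : ∃ y, B 0 1 = y * A 0 1 ∧ B 1 0 = y * A 1 0 ∧ B 0 0 - B 1 1 = y * (A 0 0 - A 1 1) by
    obtain ⟨y, hy01, hy10, hy⟩ := h
    refine ⟨B 0 0 - y * A 0 0, y, ?_⟩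
    ext i j
    fin_cases i <;> fin_cases j <;> simp [hy01, hy10]
    linear_combination -hy
  by_cases hA01 : A 0 1 = 0
  · by_cases hA10 : A 1 0 = 0
    · have hA' : A 0 0 - A 1 1 ≠ 0 := fun h ↦ hA ⟨A 0 0, by
        ext i j
        fin_cases i <;> fin_cases j <;> simp [hA01, hA10, (sub_eq_zero.1 h).symm]⟩
      refine ⟨(B 0 0 - B 1 1) / (A 0 0 - A 1 1), ?_, ?_, ?_⟩ <;> field_simp <;> grind
    · refine ⟨B 1 0 / A 1 0, ?_, ?_, ?_⟩ <;> field_simp <;> grind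
  · refine ⟨B 0 1 / A 0 1, ?_, ?_, ?_⟩ <;> field_simp <;> grind

namespace ProjectiveGL2

open Subgroup

variable {F : Type} [Field F]

theorem mk_eq_one_iff {A : GL (Fin 2) F} :
    (A : ProjectiveGL2 F) = 1 ↔ A.val ∈ Set.range (scalar (Fin 2)) := by
  rw [QuotientGroup.eq_one_iff, GeneralLinearGroup.mem_center_iff_val_mem_range_scalar]

theorem mk_eq_mk_iff {A B : GL (Fin 2) F} :
    (A : ProjectiveGL2 F) = B ↔ ∃ c : F, B.val = c • A.val := by
  rw [← inv_mul_eq_one, ← QuotientGroup.mk_inv, ← QuotientGroup.mk_mul, mk_eq_one_iff]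
  refine exists_congr fun c ↦ ?_
  have hc : c • A.val = A.val * scalar (Fin 2) c := by
    rw [← (scalar_commute _ (.all _) _).eq, scalar_apply, smul_eq_diagonal_mul]
  rw [hc, Units.val_mul, eq_comm]
  exact Units.inv_mul_eq_iff_eq_mul A

/-- The image in `PGL₂(F)` of the centralizer of a lift of `g`; for `g ≠ 1` of order prime to the
characteristic this is the maximal torus containing `g`. -/
def torus (g : ProjectiveGL2 F) : Subgroup (ProjectiveGL2 F) :=
  (centralizer (QuotientGroup.mk ⁻¹' {g})).map (QuotientGroup.mk' _)

theorem mk_mem_torus_mk_iff {A B : GL (Fin 2) F} :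
    (B : ProjectiveGL2 F) ∈ torus (A : ProjectiveGL2 F) ↔ Commute A B := by
  simp only [torus, mem_map, mem_centralizer_iff, Set.mem_preimage, Set.mem_singleton_iff,
    QuotientGroup.mk'_apply]
  constructor
  · rintro ⟨C, hC, hCB⟩
    obtain ⟨c, hc⟩ := mk_eq_mk_iff.1 hCB
    rw [Commute, SemiconjBy, Units.ext_iff, Units.val_mul, Units.val_mul, hc, mul_smul_comm,
      smul_mul_assoc, ← Units.val_mul, hC A rfl, Units.val_mul]
  · refine fun h ↦ ⟨B, fun C hCA ↦ ?_, rfl⟩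
    obtain ⟨c, hc⟩ := mk_eq_mk_iff.1 hCA.symm
    rw [Units.ext_iff, Units.val_mul, Units.val_mul, hc, mul_smul_comm,
      smul_mul_assoc, ← Units.val_mul, h.eq, Units.val_mul]

theorem self_mem_torus (g : ProjectiveGL2 F) : g ∈ torus g := by
  induction g using QuotientGroup.induction_on with
  | H A => exact mk_mem_torus_mk_iff.2 (Commute.refl A)

theorem mem_torus_comm {g h : ProjectiveGL2 F} : h ∈ torus g ↔ g ∈ torus h := by
  induction g using QuotientGroup.induction_on
  induction h using QuotientGroup.induction_on
  rw [mk_mem_torus_mk_iff, mk_mem_torus_mk_iff, commute_iff_eq, commute_iff_eq, eq_comm]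

theorem commute_of_mem_torus {g h : ProjectiveGL2 F} (hh : h ∈ torus g) : Commute g h := by
  induction g using QuotientGroup.induction_on
  induction h using QuotientGroup.induction_on
  exact (mk_mem_torus_mk_iff.1 hh).map (QuotientGroup.mk' _)

theorem conj_mem_torus_conj_iff {g h : ProjectiveGL2 F} (k : ProjectiveGL2 F) :
    k * h * k⁻¹ ∈ torus (k * g * k⁻¹) ↔ h ∈ torus g := by
  induction g using QuotientGroup.induction_on
  induction h using QuotientGroup.induction_on
  induction k using QuotientGroup.induction_on
  simp only [← QuotientGroup.mk_inv, ← QuotientGroup.mk_mul, mk_mem_torus_mk_iff,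
    Commute.conj_iff]

/- Commutation is a transitive relation on the nonscalar matrices. -/
theorem mem_torus_of_mem_torus {g h k : ProjectiveGL2 F} (hg : g ≠ 1) (hh : h ∈ torus g)
    (hk : k ∈ torus g) : k ∈ torus h := by
  induction g using QuotientGroup.induction_on with | H A
  induction h using QuotientGroup.induction_on with | H B
  induction k using QuotientGroup.induction_on with | H C
  rw [Ne, mk_eq_one_iff] at hg
  rw [mk_mem_torus_mk_iff, ← Commute.units_val_iff] at *
  obtain ⟨x, y, hB⟩ := exists_eq_scalar_add_smul_of_commute hg hh
  obtain ⟨z, w, hC⟩ := exists_eq_scalar_add_smul_of_commute hg hk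
  rw [hB, hC]
  exact .add_left (scalar_commute _ (.all _) _) (.smul_left
    (.add_right (scalar_commute _ (.all _) _).symm (.smul_right (.refl _) w)) y)

theorem torus_eq_torus_of_mem {g h : ProjectiveGL2 F} (hg : g ≠ 1) (hh : h ≠ 1)
    (hgh : h ∈ torus g) : torus h = torus g :=
  le_antisymm (fun _ ↦ mem_torus_of_mem_torus hh (mem_torus_comm.1 hgh))
    fun _ ↦ mem_torus_of_mem_torus hg hgh

theorem val_mul_self {A : GL (Fin 2) F} : (A * A).val =
    A.val.trace • A.val - scalar (Fin 2) A.val.det := by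
  rw [Units.val_mul]
  ext i j
  fin_cases i <;> fin_cases j <;>
    simp [mul_apply, trace_fin_two, det_fin_two] <;> ring

theorem mk_mul_self_eq_one_iff {A : GL (Fin 2) F} (hA : (A : ProjectiveGL2 F) ≠ 1) :
    (A * A : ProjectiveGL2 F) = 1 ↔ A.val.trace = 0 := by
  rw [← QuotientGroup.mk_mul, mk_eq_one_iff, val_mul_self]
  rw [Ne, mk_eq_one_iff] at hA
  refine ⟨?_, fun h ↦ ⟨-A.val.det, by rw [h, zero_smul, zero_sub, map_neg]⟩⟩
  rintro ⟨c, hc⟩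
  by_contra htr
  refine hA ⟨A.val.trace⁻¹ * (c + A.val.det), ?_⟩
  rw [map_mul, map_add, hc, sub_add_cancel, scalar_apply, ← smul_eq_diagonal_mul,
    inv_smul_smul₀ htr]

theorem eq_of_mem_torus_of_mul_self_eq_one [NeZero (2 : F)] {z w : ProjectiveGL2 F}
    (hz : z ≠ 1) (hzz : z * z = 1) (hw : w ≠ 1) (hww : w * w = 1) (hwz : w ∈ torus z) : w = z := by
  induction z using QuotientGroup.induction_on with | H A
  induction w using QuotientGroup.induction_on with | H B
  rw [mk_mul_self_eq_one_iff hz] at hzz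
  rw [mk_mul_self_eq_one_iff hw] at hww
  rw [mk_mem_torus_mk_iff, ← Commute.units_val_iff] at hwz
  rw [Ne, mk_eq_one_iff] at hz
  obtain ⟨x, y, hB⟩ := exists_eq_scalar_add_smul_of_commute hz hwz
  have hx : x = 0 := by
    simpa [hB, hzz, trace_add, ← two_mul, two_ne_zero] using hww
  exact (mk_eq_mk_iff.2 ⟨y, by rw [hB, hx, map_zero, zero_add]⟩).symm

/- The scalar by which commuting lifts fail to commute has square `1`, by taking determinants. -/
theorem mul_eq_neg_mul_of_commute {A B : GL (Fin 2) F}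
    (h : Commute (A : ProjectiveGL2 F) (B : ProjectiveGL2 F)) (hAB : ¬ Commute A B) :
    A.val * B.val = -(B.val * A.val) := by
  rw [commute_iff_eq, ← QuotientGroup.mk_mul, ← QuotientGroup.mk_mul, eq_comm, mk_eq_mk_iff] at h
  obtain ⟨c, hc⟩ := h
  have hdet : c * c = 1 := by
    have := congr_arg det hc
    rw [det_smul, Fintype.card_fin, sq, Units.val_mul, Units.val_mul, det_mul_comm] at this
    exact mul_right_cancel₀ (Units.ne_zero (GeneralLinearGroup.det (B * A)))
      (by rw [one_mul]; exact this.symm)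
  rcases mul_self_eq_one_iff.1 hdet with rfl | rfl
  · exact absurd (Units.ext (by simpa using hc)) hAB
  · simpa using hc

theorem mul_mem_torus_of_commute {g h k : ProjectiveGL2 F} (hh : Commute g h) (hhg : h ∉ torus g)
    (hk : Commute g k) (hkg : k ∉ torus g) : h * k ∈ torus g := by
  induction g using QuotientGroup.induction_on with | H A
  induction h using QuotientGroup.induction_on with | H B
  induction k using QuotientGroup.induction_on with | H C
  rw [mk_mem_torus_mk_iff] at hhg hkg
  rw [← QuotientGroup.mk_mul, mk_mem_torus_mk_iff, ← Commute.units_val_iff, commute_iff_eq,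
    Units.val_mul, ← mul_assoc, mul_eq_neg_mul_of_commute hh hhg, neg_mul, mul_assoc,
    mul_eq_neg_mul_of_commute hk hkg, mul_neg, neg_neg, mul_assoc]

theorem mem_torus_of_commute_of_mul_self_ne_one [NeZero (2 : F)] {g h : ProjectiveGL2 F}
    (hg : g * g ≠ 1) (hgh : Commute g h) : h ∈ torus g := by
  induction g using QuotientGroup.induction_on with | H A
  induction h using QuotientGroup.induction_on with | H B
  have hg' : (A : ProjectiveGL2 F) ≠ 1 := fun h ↦ hg (by rw [h, one_mul])
  by_contra hhg
  rw [mk_mem_torus_mk_iff] at hhg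
  refine hg ((mk_mul_self_eq_one_iff hg').2 ?_)
  have hneg : A.val.trace = -A.val.trace := by
    have hA : A.val = A.val * B.val * B.inv := by rw [mul_assoc, B.val_inv, mul_one]
    conv_lhs => rw [hA, mul_eq_neg_mul_of_commute hgh hhg]
    rw [neg_mul, trace_neg, mul_assoc, trace_mul_comm, mul_assoc, B.inv_val, mul_one]
  exact (mul_eq_zero.1 (by linear_combination hneg : 2 * A.val.trace = 0)).resolve_left two_ne_zero

theorem exists_mem_torus_mul_self_eq_one [NeZero (2 : F)] {A : GL (Fin 2) F}
    (hA : (A : ProjectiveGL2 F) ≠ 1) (hdiscr : A.val.discr ≠ 0) :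
    ∃ z ∈ torus (A : ProjectiveGL2 F), z ≠ 1 ∧ z * z = 1 := by
  set E := A.val - scalar _ (A.val.trace / 2)
  have hEE : E * E = scalar _ (A.val.discr / 4) := by rw [← sq, sub_scalar_sq_eq_discr]
  have hdet : E.det ≠ 0 := by
    have := congr_arg det hEE
    rw [det_mul, scalar_apply, det_diagonal, Finset.prod_const] at this
    intro h
    rw [h, zero_mul] at this
    exact pow_ne_zero _ (div_ne_zero hdiscr four_ne_zero_of_neZero_two) this.symm
  set Z := GeneralLinearGroup.mkOfDetNeZero E hdet
  refine ⟨Z, ?_, ?_, ?_⟩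
  · rw [mk_mem_torus_mk_iff, ← Commute.units_val_iff]
    exact (Commute.refl _).sub_right (scalar_commute _ (Commute.all _) _).symm
  · rw [Ne, mk_eq_one_iff]
    rintro ⟨c, hc⟩
    exact hA (mk_eq_one_iff.2 ⟨c + A.val.trace / 2, by
      rw [map_add, hc]; exact sub_add_cancel _ _⟩)
  · rw [← QuotientGroup.mk_mul, mk_eq_one_iff]
    exact ⟨A.val.discr / 4, hEE.symm⟩

theorem mk_pow_char_eq_one_iff [NeZero (2 : F)] (p : ℕ) [Fact p.Prime] [CharP F p]
    {A : GL (Fin 2) F} (hA : (A : ProjectiveGL2 F) ≠ 1) :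
    (A : ProjectiveGL2 F) ^ p = 1 ↔ A.val.discr = 0 := by
  obtain ⟨k, hk⟩ := odd_of_charP F p
  set τ := A.val.trace / 2
  set E := A.val - scalar _ τ
  set δ := A.val.discr / 4 with hδ
  have hpow : A.val ^ p = scalar (Fin 2) (τ ^ p) + δ ^ k • E := by
    rw [← add_sub_cancel (scalar _ τ) A.val, add_pow_char_of_commute p
      (scalar_commute _ (.all _) _), map_pow, hk, pow_succ E, pow_mul E, sub_scalar_sq_eq_discr,
      smul_eq_diagonal_mul, ← scalar_apply, map_pow _ δ]
  rw [Ne, mk_eq_one_iff] at hA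
  rw [← QuotientGroup.mk_pow, mk_eq_one_iff, Units.val_pow_eq_pow_val, hpow]
  constructor
  · rintro ⟨c, hc⟩
    by_contra hdiscr
    refine hA ⟨(δ ^ k)⁻¹ * (c - τ ^ p) + τ, ?_⟩
    rw [map_add, map_mul, map_sub, hc, add_sub_cancel_left, scalar_apply, ← smul_eq_diagonal_mul,
      inv_smul_smul₀ (pow_ne_zero _ (div_ne_zero hdiscr four_ne_zero_of_neZero_two)),
      sub_add_cancel]
  · intro hdiscr
    have hk0 : k ≠ 0 := by
      rintro rfl
      exact (Fact.out : p.Prime).ne_one hk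
    exact ⟨τ ^ p, by rw [hδ, hdiscr, zero_div, zero_pow hk0, zero_smul, add_zero]⟩

theorem exists_mem_torus_mul_self_eq_one_of_pow_char_ne_one [NeZero (2 : F)] (p : ℕ)
    [Fact p.Prime] [CharP F p] {g : ProjectiveGL2 F} (hg : g ≠ 1) (hgp : g ^ p ≠ 1) :
    ∃ z ∈ torus g, z ≠ 1 ∧ z * z = 1 := by
  induction g using QuotientGroup.induction_on
  exact exists_mem_torus_mul_self_eq_one hg (hgp ∘ (mk_pow_char_eq_one_iff p hg).2)

theorem commute_of_conj_mem_torus [NeZero (2 : F)] {z g k : ProjectiveGL2 F} (hz : z ≠ 1)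
    (hzz : z * z = 1) (hg : g ≠ 1) (hzg : z ∈ torus g) (hkg : k * g * k⁻¹ ∈ torus g) :
    Commute z k := by
  have hkg' : k * g * k⁻¹ ≠ 1 := by simpa using hg
  have hmem : k * z * k⁻¹ ∈ torus z := by
    rw [torus_eq_torus_of_mem hg hz hzg, ← torus_eq_torus_of_mem hg hkg' hkg]
    exact (conj_mem_torus_conj_iff k).2 hzg
  have hconj := eq_of_mem_torus_of_mul_self_eq_one hz hzz (by simpa using hz)
    (by rw [conj_mul, hzz, mul_one, mul_inv_cancel]) hmem
  exact (mul_inv_eq_iff_eq_mul.1 hconj).symm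

/-- The nontrivial intersections with `K` of the tori of `PGL₂(F)`. -/
def torusPartition (K : Subgroup (ProjectiveGL2 F)) : Set (Subgroup K) :=
  {T | ∃ g : K, g ≠ 1 ∧ T = (torus (g : ProjectiveGL2 F)).subgroupOf K}

theorem isNormalPartition_torusPartition (K : Subgroup (ProjectiveGL2 F)) :
    IsNormalPartition (torusPartition K) where
  ne_bot := by
    rintro _ ⟨g, hg, rfl⟩ hbot
    exact hg (mem_bot.1 (hbot ▸ mem_subgroupOf.2 (self_mem_torus _)))
  exists_mem g hg := ⟨_, ⟨g, hg, rfl⟩, mem_subgroupOf.2 (self_mem_torus _)⟩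
  eq_of_mem := by
    rintro _ ⟨g, hg, rfl⟩ _ ⟨h, hh, rfl⟩ x hx hxg hxh
    have hne {y : K} (hy : y ≠ 1) : (y : ProjectiveGL2 F) ≠ 1 := by simpa using hy
    rw [← torus_eq_torus_of_mem (hne hg) (hne hx) hxg,
      ← torus_eq_torus_of_mem (hne hh) (hne hx) hxh]
  map_conj_mem := by
    rintro _ ⟨g, hg, rfl⟩ k
    refine ⟨k * g * k⁻¹, by simpa using hg, ?_⟩
    ext x
    rw [mem_map_equiv, mem_subgroupOf, mem_subgroupOf,
      ← conj_mem_torus_conj_iff (k : ProjectiveGL2 F)]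
    simp [mul_assoc]

theorem isToralPartition_torusPartition [NeZero (2 : F)] {K : Subgroup (ProjectiveGL2 F)}
    (hK : ∀ g ∈ K, g ≠ 1 → ∃ z ∈ torus g, z ≠ 1 ∧ z * z = 1) :
    IsToralPartition (torusPartition K) where
  __ := isNormalPartition_torusPartition K
  commute := by
    rintro _ ⟨g, hg, rfl⟩ x hx y hy
    have hne : (g : ProjectiveGL2 F) ≠ 1 := by simpa using hg
    exact Subtype.ext (commute_of_mem_torus (mem_torus_of_mem_torus hne hx hy)).eq
  relIndex_normalizer_dvd_two := by
    rintro _ ⟨g, hg, rfl⟩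
    set T := (torus (g : ProjectiveGL2 F)).subgroupOf K
    have hne : (g : ProjectiveGL2 F) ≠ 1 := by simpa using hg
    obtain ⟨z, hzg, hz, hzz⟩ := hK g g.2 hne
    have hTz (k : K) : k ∈ T ↔ (k : ProjectiveGL2 F) ∈ torus z := by
      rw [mem_subgroupOf, torus_eq_torus_of_mem hne hz hzg]
    have hcomm (k : K) (hk : k ∈ normalizer (T : Set K)) : Commute z k :=
      commute_of_conj_mem_torus hz hzz hne hzg
        ((mem_normalizer_iff.1 hk g).1 (mem_subgroupOf.2 (self_mem_torus _)))
    rw [relIndex_dvd_two_iff]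
    by_cases hle : ∀ b ∈ normalizer (T : Set K), b ∈ T
    · exact ⟨1, one_mem _, fun b hb ↦ Or.inr (hle b hb)⟩
    · push Not at hle
      obtain ⟨a, ha, haT⟩ := hle
      refine ⟨a, ha, fun b hb ↦ or_iff_not_imp_right.2 fun hbT ↦ ?_⟩
      rw [hTz] at haT hbT ⊢
      exact mul_mem_torus_of_commute (hcomm b hb) hbT (hcomm a ha) haT

theorem mk_mem_socleSL2_iff {A : GL (Fin 2) F} :
    (A : ProjectiveGL2 F) ∈ socleSL2 F ↔ IsSquare A.val.det := by
  constructor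
  · rintro ⟨S, hS⟩
    obtain ⟨c, hc⟩ := mk_eq_mk_iff.1 hS
    exact ⟨c, by simp [hc, sq]⟩
  · rintro ⟨c, hc⟩
    have hc0 : c ≠ 0 := by
      rintro rfl
      exact (GeneralLinearGroup.det A).ne_zero (by simpa using hc)
    refine ⟨⟨c⁻¹ • A.val, ?_⟩, mk_eq_mk_iff.2 ⟨c, ?_⟩⟩
    · rw [det_smul, hc, Fintype.card_fin]
      field_simp
    · exact (smul_inv_smul₀ hc0 A.val).symm

theorem socleSL2_index_eq_two [Finite F] [NeZero (2 : F)] : (socleSL2 F).index = 2 := by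
  have hF : ringChar F ≠ 2 := fun h ↦
    two_ne_zero (α := F) (by exact_mod_cast h ▸ CharP.cast_eq_zero F (ringChar F))
  obtain ⟨a, ha⟩ := FiniteField.exists_nonsquare hF
  have hdet : (diagonal ![a, 1]).det = a := by simp
  have ha0 : a ≠ 0 := fun h ↦ ha (h ▸ IsSquare.zero)
  set D : GL (Fin 2) F := GeneralLinearGroup.mkOfDetNeZero (diagonal ![a, 1]) (hdet.symm ▸ ha0)
  have hD : D.val.det = a := hdet
  refine Subgroup.index_eq_two_iff_exists_notMem_and.2 ⟨D, ?_, fun b ↦ ?_⟩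
  · rwa [mk_mem_socleSL2_iff, hD]
  · induction b using QuotientGroup.induction_on with | H B
    rw [or_iff_not_imp_right, ← QuotientGroup.mk_mul, mk_mem_socleSL2_iff, mk_mem_socleSL2_iff,
      Units.val_mul, det_mul, hD]
    exact fun hB ↦ isSquare_mul_of_not_isSquare hB ha

theorem sq_eq_one_of_notMem_socleSL2 [NeZero (2 : F)] (h2 : IsSquare (2 : F))
    {s : ProjectiveGL2 F} (hs : s ∉ socleSL2 F) (hs4 : s ^ 4 = 1) : s ^ 2 = 1 := by
  induction s using QuotientGroup.induction_on with | H A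
  by_contra hAA
  rw [sq, ← QuotientGroup.mk_mul] at hAA
  have htr : (A * A).val.trace = 0 := by
    rw [← mk_mul_self_eq_one_iff hAA, QuotientGroup.mk_mul, ← sq, ← sq, ← pow_mul]
    exact hs4
  have hdet : A.val.det = A.val.trace * A.val.trace / 2 := by
    rw [val_mul_self, trace_sub, trace_smul, scalar_apply, trace_diagonal] at htr
    simp only [smul_eq_mul, Finset.sum_const, Finset.card_univ, Fintype.card_fin, nsmul_eq_mul,
      Nat.cast_ofNat] at htr
    rw [eq_div_iff two_ne_zero]
    linear_combination -htr
  exact hs (mk_mem_socleSL2_iff.2 (hdet ▸ (IsSquare.mul_self _).div h2))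

theorem exists_commute_ne_of_notMem_socleSL2 (hneg : IsSquare (-1 : F)) {t : ProjectiveGL2 F}
    (ht : t ∉ socleSL2 F) (htt : t * t = 1) : ∃ h, Commute t h ∧ h ≠ 1 ∧ h ≠ t := by
  induction t using QuotientGroup.induction_on with | H A
  have hA : (A : ProjectiveGL2 F) ≠ 1 := fun h ↦ ht (h ▸ one_mem _)
  rw [mk_mul_self_eq_one_iff hA] at htt
  rw [mk_mem_socleSL2_iff] at ht
  rw [Ne, mk_eq_one_iff] at hA
  have hdet : (1 + A.val).det = 1 + A.val.det := by
    rw [trace_fin_two] at htt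
    simp only [det_fin_two, one_fin_two, Matrix.add_apply, of_apply, cons_val]
    linear_combination htt
  have hdet0 : (1 + A.val).det ≠ 0 := by
    rw [hdet]
    exact fun h ↦ ht (neg_eq_of_add_eq_zero_right h ▸ hneg)
  set B := GeneralLinearGroup.mkOfDetNeZero (1 + A.val) hdet0
  have hB : B.val = 1 + A.val := rfl
  refine ⟨B, ?_, ?_, fun h ↦ ?_⟩
  · refine commute_of_mem_torus (mk_mem_torus_mk_iff.2 (Commute.units_val_iff.1 ?_))
    exact (Commute.one_right _).add_right (Commute.refl _)
  · rw [Ne, mk_eq_one_iff]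
    rintro ⟨c, hc⟩
    exact hA ⟨c - 1, by rw [map_sub, hc, hB, map_one, add_sub_cancel_left]⟩
  · obtain ⟨c, hc⟩ := mk_eq_mk_iff.1 h.symm
    by_cases hc1 : c = 1
    · rw [hc1, one_smul, hB] at hc
      exact one_ne_zero (add_eq_right.1 hc)
    · refine hA ⟨(c - 1)⁻¹, ?_⟩
      have h1 : (1 : Matrix (Fin 2) (Fin 2) F) = (c - 1) • A.val := by
        rw [sub_smul, one_smul, ← hc, hB, add_sub_cancel_right]
      rw [scalar_apply, ← mul_one (diagonal _), ← smul_eq_diagonal_mul, h1,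
        inv_smul_smul₀ (sub_ne_zero.2 hc1)]

/-- The class in `PGL₂(F)` of the elementary matrix with entry `x` in position `(i, j)`. -/
def transvection {i j : Fin 2} (hij : i ≠ j) (x : F) : ProjectiveGL2 F :=
  (SpecialLinearGroup.toGL (SpecialLinearGroup.transvection hij x) : GL (Fin 2) F)

theorem transvection_zero {i j : Fin 2} (hij : i ≠ j) : transvection hij (0 : F) = 1 := by
  rw [transvection, SpecialLinearGroup.transvection_coeff_zero, map_one, QuotientGroup.mk_one]

theorem transvection_add {i j : Fin 2} (hij : i ≠ j) (x y : F) :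
    transvection hij (x + y) = transvection hij x * transvection hij y := by
  rw [transvection, SpecialLinearGroup.transvection_add, map_mul, QuotientGroup.mk_mul]
  rfl

theorem transvection_neg {i j : Fin 2} (hij : i ≠ j) (x : F) :
    transvection hij (-x) = (transvection hij x)⁻¹ := by
  rw [eq_inv_iff_mul_eq_one, ← transvection_add, neg_add_cancel, transvection_zero]

theorem transvection_mul_self_ne_one [NeZero (2 : F)] {i j : Fin 2} (hij : i ≠ j) {x : F}
    (hx : x ≠ 0) : transvection hij x * transvection hij x ≠ 1 := by
  rw [← transvection_add, Ne, transvection, mk_eq_one_iff]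
  rintro ⟨c, hc⟩
  simpa [SpecialLinearGroup.transvection_coe, hij, ← two_mul, two_ne_zero, hx] using
    congr_fun₂ hc i j

theorem exists_not_commute [NeZero (2 : F)] {g : ProjectiveGL2 F} (hg : g ≠ 1) :
    ∃ h, ¬ Commute g h := by
  by_contra! hcomm
  refine hg ?_
  induction g using QuotientGroup.induction_on with | H A
  refine mk_eq_one_iff.2 (mem_range_scalar_of_commute_single fun i j hij ↦ ?_)
  have hmem := mem_torus_of_commute_of_mul_self_ne_one
    (transvection_mul_self_ne_one hij one_ne_zero) (hcomm (transvection hij 1)).symm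
  have hA := Commute.units_val_iff.2 (mk_mem_torus_mk_iff.1 hmem)
  rw [SpecialLinearGroup.coe_GL_coe_matrix, SpecialLinearGroup.transvection_coe] at hA
  simpa [add_mul, mul_add, commute_iff_eq] using hA

theorem transvection_zero_one_val (x : F) :
    (SpecialLinearGroup.transvection (zero_ne_one (α := Fin 2)) x).val = !![1, x; 0, 1] := by
  ext i j
  fin_cases i <;> fin_cases j <;> simp [SpecialLinearGroup.transvection_coe]

theorem transvection_one_zero_val (x : F) :
    (SpecialLinearGroup.transvection (one_ne_zero (α := Fin 2)) x).val = !![1, 0; x, 1] := by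
  ext i j
  fin_cases i <;> fin_cases j <;> simp [SpecialLinearGroup.transvection_coe]

theorem socleSL2_le_of_transvection_mem {K : Subgroup (ProjectiveGL2 F)}
    (hK : ∀ (i j : Fin 2) (hij : i ≠ j) (x : F), transvection hij x ∈ K) : socleSL2 F ≤ K := by
  rintro _ ⟨S, rfl⟩
  exact SL2.transvection_induction
    (fun S ↦ QuotientGroup.mk' (center (GL (Fin 2) F)) (SpecialLinearGroup.toGL S) ∈ K)
    hK (fun A B hA hB ↦ by simpa only [map_mul] using mul_mem hA hB) S

/- Multiplying `A` on both sides by upper unipotents clears its diagonal, and the resulting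
antidiagonal matrix conjugates the upper unipotents to the lower ones. -/
theorem transvection_one_zero_mem {K : Subgroup (ProjectiveGL2 F)}
    (hK : ∀ x : F, transvection zero_ne_one x ∈ K) {A : GL (Fin 2) F}
    (hA : (A : ProjectiveGL2 F) ∈ K) (hA10 : A.val 1 0 ≠ 0) (x : F) :
    transvection one_ne_zero x ∈ K := by
  obtain ⟨W, hWK, w, hw⟩ : ∃ W : GL (Fin 2) F, (W : ProjectiveGL2 F) ∈ K ∧
      ∃ w, W.val = !![0, w; A.val 1 0, 0] := by
    refine ⟨_, mul_mem (mul_mem (hK (-A.val 0 0 / A.val 1 0)) hA) (hK (-A.val 1 1 / A.val 1 0)),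
      A.val 0 1 - A.val 0 0 * A.val 1 1 / A.val 1 0, ?_⟩
    rw [Units.val_mul, Units.val_mul, SpecialLinearGroup.coe_GL_coe_matrix,
      SpecialLinearGroup.coe_GL_coe_matrix, transvection_zero_one_val, transvection_zero_one_val]
    ext i j
    fin_cases i <;> fin_cases j <;> simp [mul_apply, vecMul, dotProduct] <;> field_simp <;> ring
  have hw0 : w ≠ 0 := by
    rintro rfl
    exact (GeneralLinearGroup.det W).ne_zero (by simp [hw])
  have hconj : (W : ProjectiveGL2 F) * transvection zero_ne_one (x * w / A.val 1 0) =
      transvection one_ne_zero x * W := by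
    refine congr_arg QuotientGroup.mk (Units.ext ?_)
    rw [Units.val_mul, Units.val_mul, SpecialLinearGroup.coe_GL_coe_matrix,
      SpecialLinearGroup.coe_GL_coe_matrix, transvection_zero_one_val, transvection_one_zero_val,
      hw]
    ext i j
    fin_cases i <;> fin_cases j <;> simp
    field_simp
  rw [← mul_inv_eq_iff_eq_mul.2 hconj]
  exact mul_mem (mul_mem hWK (hK _)) (inv_mem hWK)

theorem apply_one_zero_eq_zero_of_conj_mem_torus {B : GL (Fin 2) F}
    (hB : (B : ProjectiveGL2 F) * transvection zero_ne_one 1 * (B : ProjectiveGL2 F)⁻¹ ∈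
      torus (transvection zero_ne_one 1)) : B.val 1 0 = 0 := by
  set U : GL (Fin 2) F :=
    SpecialLinearGroup.toGL (SpecialLinearGroup.transvection zero_ne_one 1)
  have hU : U.val = !![1, 1; 0, 1] := transvection_zero_one_val 1
  have hUX : Commute U (B * U * B⁻¹) := mk_mem_torus_mk_iff.1 hB
  have hns : U.val ∉ Set.range (scalar (Fin 2)) := by
    rintro ⟨c, hc⟩
    simpa [hU] using congr_fun₂ hc 0 1
  obtain ⟨x, y, hX⟩ := exists_eq_scalar_add_smul_of_commute hns (Commute.units_val_iff.2 hUX)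
  have hXB : (scalar (Fin 2) x + y • U.val) * B.val = B.val * U.val := by
    rw [← hX, ← Units.val_mul, ← Units.val_mul, inv_mul_cancel_right]
  have h10 : (x + y) * B.val 1 0 = B.val 1 0 := by
    simpa [hU, mul_apply] using congr_fun₂ hXB 1 0
  have h11 : (x + y) * B.val 1 1 = B.val 1 0 + B.val 1 1 := by
    simpa [hU, mul_apply] using congr_fun₂ hXB 1 1
  by_contra hne
  rw [mul_eq_right₀ hne] at h10
  rw [h10, one_mul, right_eq_add] at h11
  exact hne h11

theorem mul_transvection_of_apply_one_zero_eq_zero {B : GL (Fin 2) F} (hB : B.val 1 0 = 0) (x : F) :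
    (B : ProjectiveGL2 F) * transvection zero_ne_one x =
      transvection zero_ne_one (B.val 0 0 / B.val 1 1 * x) * B := by
  have hdet := (GeneralLinearGroup.det B).ne_zero
  rw [GeneralLinearGroup.val_det_apply, det_fin_two, hB, mul_zero, sub_zero] at hdet
  have h11 : B.val 1 1 ≠ 0 := right_ne_zero_of_mul hdet
  refine congr_arg QuotientGroup.mk (Units.ext ?_)
  rw [Units.val_mul, Units.val_mul, SpecialLinearGroup.coe_GL_coe_matrix,
    SpecialLinearGroup.coe_GL_coe_matrix, transvection_zero_one_val, transvection_zero_one_val]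
  ext i j
  fin_cases i <;> fin_cases j <;> simp [mul_apply, hB]
  field_simp
  ring

theorem exists_conj_transvection_eq [NeZero (2 : F)] {A : GL (Fin 2) F} (hA : A.IsParabolic) :
    ∃ k : ProjectiveGL2 F, k * transvection zero_ne_one 1 * k⁻¹ = (A : ProjectiveGL2 F) := by
  obtain ⟨a, n, hAn, hn, hnn⟩ := isParabolic_iff_exists.1 hA
  obtain ⟨u, v, huv, hu, hnu⟩ : ∃ u v, n *ᵥ v = u ∧ u ≠ 0 ∧ n *ᵥ u = 0 := by
    obtain ⟨v, hv⟩ : ∃ v, n *ᵥ v ≠ 0 := by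
      by_contra! h
      exact hn (ext_of_mulVec_single fun i ↦ by rw [h, zero_mulVec])
    exact ⟨_, v, rfl, hv, by rw [mulVec_mulVec, ← sq, hnn, zero_mulVec]⟩
  have ha : a ≠ 0 := by
    rintro rfl
    rw [map_zero, zero_add] at hAn
    exact (A ^ 2).ne_zero (by rw [Units.val_pow_eq_pow_val, hAn, hnn])
  let P : Matrix (Fin 2) (Fin 2) F := (of ![u, a • v])ᵀ
  have hP : IsUnit P := by
    refine linearIndependent_cols_iff_isUnit.1 (linearIndependent_fin2.2 ⟨?_, fun c hc ↦ hu ?_⟩)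
    · exact smul_ne_zero ha (by rintro rfl; exact hu (huv ▸ mulVec_zero n))
    · replace hc : (c * a) • v = u := (mul_smul c a v).trans hc
      have hcau : (c * a) • u = 0 := by rw [← huv, ← mulVec_smul, hc, hnu]
      rw [← hc, (smul_eq_zero.1 hcau).resolve_right hu, zero_smul]
  obtain ⟨k, hk⟩ := hP
  refine ⟨k, mul_inv_eq_iff_eq_mul.2 (mk_eq_mk_iff.2 ⟨a, ?_⟩)⟩
  rw [Units.val_mul, Units.val_mul, hk, hAn, SpecialLinearGroup.coe_GL_coe_matrix,
    transvection_zero_one_val]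
  refine ext_col fun j ↦ ?_
  change (scalar (Fin 2) a + n) *ᵥ P.col j = _
  rw [add_mulVec, scalar_apply, diagonal_const_mulVec]
  fin_cases j
  · change a • u + n *ᵥ u = _
    ext i
    simp [P, hnu, mul_apply]
  · change a • a • v + n *ᵥ (a • v) = _
    ext i
    simp only [mulVec_smul, huv]
    simp [P, mul_apply, mul_add, add_comm]

theorem eq_top_of_socleSL2_le [Finite F] [NeZero (2 : F)]
    {K : Subgroup (ProjectiveGL2 F)} (hK : socleSL2 F ≤ K) {t : ProjectiveGL2 F} (htK : t ∈ K)
    (ht : t ∉ socleSL2 F) : K = ⊤ := by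
  refine eq_top_iff.2 fun g _ ↦ ?_
  by_cases hg : g ∈ socleSL2 F
  · exact hK hg
  · refine (mul_mem_cancel_right htK).1 (hK ?_)
    rw [mul_mem_iff_of_index_two socleSL2_index_eq_two]
    exact iff_of_false hg ht

theorem apply_one_zero_ne_zero_of_mul_self_eq_one (hneg : IsSquare (-1 : F)) {A : GL (Fin 2) F}
    (hA : (A : ProjectiveGL2 F) ∉ socleSL2 F) (hAA : (A : ProjectiveGL2 F) * A = 1) :
    A.val 1 0 ≠ 0 := by
  have hA1 : (A : ProjectiveGL2 F) ≠ 1 := fun h ↦ hA (h ▸ one_mem _)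
  have htr := (mk_mul_self_eq_one_iff hA1).1 hAA
  rw [trace_fin_two, add_eq_zero_iff_neg_eq] at htr
  intro h10
  rw [mk_mem_socleSL2_iff, det_fin_two, h10, mul_zero, sub_zero, ← htr, mul_neg,
    ← neg_one_mul] at hA
  exact hA (hneg.mul (IsSquare.mul_self _))

theorem eq_top_of_transvection_mem [Fintype F] [NeZero (2 : F)] {p n : ℕ} (hp : p.Prime)
    (hF : Fintype.card F = p ^ 2 ^ n) (hneg : IsSquare (-1 : F))
    {K : Subgroup (ProjectiveGL2 F)} (h1 : transvection zero_ne_one 1 ∈ K)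
    {k : ProjectiveGL2 F} (hkK : k ∈ K) (hk : k ∉ socleSL2 F)
    (hk1 : k * transvection zero_ne_one 1 * k⁻¹ ∈ torus (transvection zero_ne_one 1))
    {t : ProjectiveGL2 F} (htK : t ∈ K) (ht : t ∉ socleSL2 F) (htt : t * t = 1) : K = ⊤ := by
  let M : AddSubgroup F :=
    { carrier := {x | transvection zero_ne_one x ∈ K}
      zero_mem' := by simp [transvection_zero]
      add_mem' hx hy := by simpa [transvection_add] using mul_mem hx hy
      neg_mem' hx := by simpa [transvection_neg] using hx }
  induction k using QuotientGroup.induction_on with | H B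
  induction t using QuotientGroup.induction_on with | H A
  have hB := apply_one_zero_eq_zero_of_conj_mem_torus hk1
  have hns : ¬ IsSquare (B.val 0 0 / B.val 1 1) := by
    rw [mk_mem_socleSL2_iff, det_fin_two, hB, mul_zero, sub_zero] at hk
    rintro ⟨c, hc⟩
    refine hk ⟨c * B.val 1 1, ?_⟩
    rw [mul_mul_mul_comm, ← hc, ← mul_assoc, div_mul_cancel₀]
    intro h
    exact hk (by simp [h])
  have hM : M = ⊤ := addSubgroup_eq_top_of_not_isSquare_mul_mem hp hF h1 hns fun x hx ↦ by
    have := mul_mem (mul_mem hkK hx) (inv_mem hkK)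
    rwa [mul_transvection_of_apply_one_zero_eq_zero hB, mul_inv_cancel_right] at this
  have hU (x : F) : transvection zero_ne_one x ∈ K := (hM ▸ AddSubgroup.mem_top x : x ∈ M)
  refine eq_top_of_socleSL2_le (socleSL2_le_of_transvection_mem fun i j hij x ↦ ?_) htK ht
  fin_cases i <;> fin_cases j
  · exact absurd rfl hij
  · exact hU x
  · exact transvection_one_zero_mem hU htK
      (apply_one_zero_ne_zero_of_mul_self_eq_one hneg ht htt) x
  · exact absurd rfl hij

theorem eq_top_of_conj_mem_torus [Fintype F] [NeZero (2 : F)] {p n : ℕ} [Fact p.Prime]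
    (hF : Fintype.card F = p ^ 2 ^ n) (hneg : IsSquare (-1 : F))
    {K : Subgroup (ProjectiveGL2 F)} {v : ProjectiveGL2 F}
    (hv : v ∈ K) (hv1 : v ≠ 1) (hvp : v ^ p = 1) {x : ProjectiveGL2 F} (hx : x ∈ K)
    (hxN : x ∉ socleSL2 F) (hxv : x * v * x⁻¹ ∈ torus v) {t : ProjectiveGL2 F} (ht : t ∈ K)
    (htN : t ∉ socleSL2 F) (htt : t * t = 1) : K = ⊤ := by
  have : CharP F p := charP_of_card_eq_prime_pow hF
  obtain ⟨k, rfl⟩ : ∃ k, k * transvection zero_ne_one 1 * k⁻¹ = v := by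
    induction v using QuotientGroup.induction_on with | H A
    exact exists_conj_transvection_eq
      ⟨mk_eq_one_iff.not.1 hv1, (mk_pow_char_eq_one_iff p hv1).1 hvp⟩
  have hconj (g : ProjectiveGL2 F) : k * (k⁻¹ * g * k) * k⁻¹ = g := by group
  have hsocle {g : ProjectiveGL2 F} (hg : g ∉ socleSL2 F) : k⁻¹ * g * k ∉ socleSL2 F := fun h ↦
    hg (hconj g ▸ (conj_mem_iff_of_index_two socleSL2_index_eq_two).2 h)
  let K' := K.comap (MulAut.conj k).toMonoidHom
  have hmem {g : ProjectiveGL2 F} (hg : g ∈ K) : k⁻¹ * g * k ∈ K' := by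
    simpa [K', hconj] using hg
  refine comap_injective (MulAut.conj k).surjective (?_ : K' = ⊤)
  refine eq_top_of_transvection_mem Fact.out hF hneg hv (hmem hx) (hsocle hxN) ?_ (hmem ht)
    (hsocle htN) ?_
  · rw [← conj_mem_torus_conj_iff k]
    convert! hxv using 1
    group
  · rw [show k⁻¹ * t * k * (k⁻¹ * t * k) = k⁻¹ * (t * t) * k by group, htt, mul_one, inv_mul_cancel]

theorem eq_top_of_pow_char_eq_one [Fintype F] [NeZero (2 : F)] {p n : ℕ} [Fact p.Prime]
    (hF : Fintype.card F = p ^ 2 ^ n) (hneg : IsSquare (-1 : F))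
    {K : Subgroup (ProjectiveGL2 F)} {u : ProjectiveGL2 F} (hu : u ∈ K) (hu1 : u ≠ 1)
    (hup : u ^ p = 1) {t : ProjectiveGL2 F} (ht : t ∈ K) (htN : t ∉ socleSL2 F) (htt : t * t = 1) :
    K = ⊤ := by
  have : CharP F p := charP_of_card_eq_prime_pow hF
  have hN := index_subgroupOf_eq_two socleSL2_index_eq_two ht htN
  have := normal_of_index_eq_two hN
  have hdvd : p ∣ Nat.card ((socleSL2 F).subgroupOf K) := by
    have huN : (⟨u, hu⟩ : K) ∈ (socleSL2 F).subgroupOf K :=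
      mem_of_pow_eq_one_of_index_two hN (odd_of_charP F p) (Subtype.ext hup)
    rw [← orderOf_eq_prime hup hu1, ← orderOf_mk u hu, ← orderOf_mk _ huN]
    exact orderOf_dvd_natCard _
  obtain ⟨x, hxN, v, hv, hcomm⟩ := exists_notMem_commute_conj (mt index_eq_one.2 (by lia)) hdvd
  have hv1 : (v : ProjectiveGL2 F) ≠ 1 := by
    intro h
    rw [OneMemClass.coe_eq_one.1 h, orderOf_one] at hv
    exact (Fact.out : p.Prime).ne_one hv.symm
  have hvp : (v : ProjectiveGL2 F) ^ p = 1 := by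
    rw [← coe_pow, ← hv, pow_orderOf_eq_one, coe_one]
  have hvv : (v : ProjectiveGL2 F) * v ≠ 1 := fun h ↦ hv1 <|
    (pow_eq_one_iff_of_coprime (Nat.coprime_two_left.2 (odd_of_charP F p))).1 ⟨(sq _).trans h, hvp⟩
  exact eq_top_of_conj_mem_torus hF hneg v.2 hv1 hvp x.2 hxN
    (mem_torus_of_commute_of_mul_self_ne_one hvv (hcomm.map K.subtype)) ht htN htt

theorem exists_forall_commute_of_ne_top [Fintype F] [NeZero (2 : F)] {p n : ℕ} [Fact p.Prime]
    (hF : Fintype.card F = p ^ 2 ^ n) (hneg : IsSquare (-1 : F))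
    (h2 : IsSquare (2 : F)) {K : Subgroup (ProjectiveGL2 F)} (hK : K ≠ ⊤) {t : ProjectiveGL2 F}
    (ht : t ∈ K) (htN : t ∉ socleSL2 F) (htt : t * t = 1) :
    ∃ z, z ≠ 1 ∧ z * z = 1 ∧ ∀ k ∈ K, Commute z k := by
  have : CharP F p := charP_of_card_eq_prime_pow hF
  have hexists (g) (hg : g ∈ K) (hg1 : g ≠ 1) : ∃ z ∈ torus g, z ≠ 1 ∧ z * z = 1 :=
    exists_mem_torus_mul_self_eq_one_of_pow_char_ne_one p hg1 fun hgp ↦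
      hK (eq_top_of_pow_char_eq_one hF hneg hg hg1 hgp ht htN htt)
  obtain ⟨_, ⟨g, hg, rfl⟩, hT⟩ := (isToralPartition_torusPartition hexists).exists_normal
    (index_subgroupOf_eq_two socleSL2_index_eq_two ht htN) (t := ⟨t, ht⟩) htN
    (Subtype.ext htt) fun s hs hs4 ↦ Subtype.ext <|
      sq_eq_one_of_notMem_socleSL2 h2 hs (congr_arg Subtype.val hs4)
  have hg1 : (g : ProjectiveGL2 F) ≠ 1 := mt OneMemClass.coe_eq_one.1 hg
  obtain ⟨z, hzg, hz, hzz⟩ := hexists g g.2 hg1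
  exact ⟨z, hz, hzz, fun k hk ↦ commute_of_conj_mem_torus hz hzz hg1 hzg
    (hT.conj_mem g (self_mem_torus _) ⟨k, hk⟩)⟩

theorem eq_of_commute_of_not_commute [NeZero (2 : F)] {t h : ProjectiveGL2 F} (htt : t * t = 1)
    (hth : ¬ Commute t h) {z w : ProjectiveGL2 F} (hz : z ≠ 1) (hzz : z * z = 1)
    (hzt : Commute z t) (hzh : Commute z h) (hw : w ≠ 1) (hww : w * w = 1) (hwt : Commute w t)
    (hwh : Commute w h) : w = z := by
  have ht : t ≠ 1 := fun h1 ↦ hth (h1 ▸ Commute.one_left h)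
  have htz : t ∉ torus z := fun hmem ↦
    hth (eq_of_mem_torus_of_mul_self_eq_one hz hzz ht htt hmem ▸ hzh)
  obtain ⟨m, hmz, htm, hwm⟩ : ∃ m ∈ torus z, ¬ Commute t m ∧ Commute w m := by
    by_cases hhz : h ∈ torus z
    · exact ⟨h, hhz, hth, hwh⟩
    · exact ⟨t * h, mul_mem_torus_of_commute hzt htz hzh hhz,
        fun hcomm ↦ hth (by simpa using (Commute.refl t).inv_right.mul_right hcomm),
        hwt.mul_right hwh⟩
  have hm : m ≠ 1 := fun h1 ↦ htm (h1 ▸ Commute.one_right t)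
  have hmm : m * m ≠ 1 := fun hmm ↦
    htm (eq_of_mem_torus_of_mul_self_eq_one hz hzz hm hmm hmz ▸ hzt.symm)
  have hwz : w ∈ torus z := torus_eq_torus_of_mem hz hm hmz ▸
    mem_torus_of_commute_of_mul_self_ne_one hmm hwm.symm
  exact eq_of_mem_torus_of_mul_self_eq_one hz hzz hw hww hwz

variable {R : Type*} [Ring R] [LocallyFiniteOrder (Subgroup (ProjectiveGL2 F))]
  [DecidableEq (Subgroup (ProjectiveGL2 F))]

theorem mu_top_eq_zero_of_not_commute [Fintype F] [NeZero (2 : F)] {p n : ℕ} [Fact p.Prime]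
    (hF : Fintype.card F = p ^ 2 ^ n) (hneg : IsSquare (-1 : F))
    (h2 : IsSquare (2 : F)) {H : Subgroup (ProjectiveGL2 F)} (hH : H ≠ ⊤)
    (hcenter : ∀ z ∈ H, z ≠ 1 → z * z = 1 → ∃ h ∈ H, ¬ Commute z h) {t : ProjectiveGL2 F}
    (ht : t ∈ H) (htN : t ∉ socleSL2 F) (htt : t * t = 1) :
    IncidenceAlgebra.mu R H ⊤ = 0 := by
  obtain ⟨h, hh, hth⟩ := hcenter t ht (fun h1 ↦ htN (h1 ▸ one_mem _)) htt
  obtain ⟨z, hz, hzz, hzH⟩ := exists_forall_commute_of_ne_top hF hneg h2 hH ht htN htt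
  have le_centralizer {w : ProjectiveGL2 F} {K : Subgroup (ProjectiveGL2 F)}
      (hK : ∀ k ∈ K, Commute w k) : K ≤ centralizer {w} := fun k hk ↦
    mem_centralizer_singleton_iff.2 (hK k hk).symm
  refine mu_top_eq_zero_of_forall_le (m := centralizer {z}) ?_
    ((le_centralizer hzH).lt_of_ne fun heq ↦ ?_) fun K hHK hK ↦ ?_
  · obtain ⟨g, hg⟩ := exists_not_commute hz
    exact fun htop ↦ hg (mem_centralizer_singleton_iff.1 (htop ▸ mem_top g)).symm
  · obtain ⟨k, hk, hzk⟩ := hcenter z (heq ▸ mem_centralizer_singleton_iff.2 rfl) hz hzz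
    exact hzk (hzH k hk)
  · obtain ⟨w, hw, hww, hwK⟩ := exists_forall_commute_of_ne_top hF hneg h2 hK (hHK ht) htN htt
    rw [← eq_of_commute_of_not_commute htt hth hz hzz (hzH t ht) (hzH h hh) hw hww
      (hwK t (hHK ht)) (hwK h (hHK hh))]
    exact le_centralizer hwK

theorem mu_zpowers_top_eq_zero [Fintype F] [NeZero (2 : F)] {p n : ℕ} [Fact p.Prime]
    (hF : Fintype.card F = p ^ 2 ^ n) (hneg : IsSquare (-1 : F))
    (h2 : IsSquare (2 : F)) {t : ProjectiveGL2 F} (htN : t ∉ socleSL2 F) (htt : t * t = 1) :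
    IncidenceAlgebra.mu R (zpowers t) ⊤ = 0 := by
  have := Fintype.ofFinite (Subgroup (ProjectiveGL2 F))
  have ht : t ≠ 1 := fun h1 ↦ htN (h1 ▸ one_mem _)
  have hCtop : centralizer {t} ≠ ⊤ := by
    obtain ⟨g, hg⟩ := exists_not_commute ht
    exact fun htop ↦ hg (mem_centralizer_singleton_iff.1 (htop ▸ mem_top g)).symm
  have hinf : zpowers t ⊓ centralizer {t} = zpowers t := inf_eq_left.2 <|
    zpowers_le.2 (mem_centralizer_singleton_iff.2 rfl)
  rw [← sum_mu_top_filter_inf_eq (R := R) hCtop (zpowers t),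
    Finset.sum_eq_single_of_mem (zpowers t) (by simp [hinf])]
  intro H hH hHt
  have hHC : H ⊓ centralizer {t} = zpowers t := (Finset.mem_filter.1 hH).2
  have htH : zpowers t ≤ H := hHC ▸ inf_le_left
  have hcomm {h} (hh : h ∈ H) (hth : Commute t h) : h ∈ zpowers t :=
    hHC ▸ ⟨hh, mem_centralizer_singleton_iff.2 hth.symm⟩
  obtain ⟨h, hh, hht⟩ : ∃ h ∈ H, h ∉ zpowers t :=
    SetLike.not_le_iff_exists.1 fun hle ↦ hHt (hle.antisymm htH)
  refine mu_top_eq_zero_of_not_commute hF hneg h2 ?_ ?_ (htH (mem_zpowers t)) htN htt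
  · rintro rfl
    obtain ⟨g, hg, hg1, hgt⟩ := exists_commute_ne_of_notMem_socleSL2 hneg htN htt
    exact (eq_one_or_eq_of_mem_zpowers htt (hcomm (mem_top g) hg)).elim hg1 hgt
  · intro z hz hz1 _
    by_contra! hzH
    obtain rfl | rfl := eq_one_or_eq_of_mem_zpowers htt
      (hcomm hz (hzH t (htH (mem_zpowers t))).symm)
    · exact hz1 rfl
    · exact hht (hcomm hh (hzH h hh))

end ProjectiveGL2

/-- The Möbius function of the subgroup lattice of `PGL₂(p^(2^n))` (p odd, n ≥ 1),
evaluated at (⊥, ⊤), equals 0. -/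
theorem mobius_subgroup_lattice_PGL2_eq_zero (p n : ℕ) (hp : Nat.Prime p) (hodd : Odd p) (hn : 1 ≤ n)
    (F : Type) [Field F] [Fintype F] (hF : Fintype.card F = p ^ 2 ^ n)
    (μ : Subgroup (ProjectiveGL2 F) → Subgroup (ProjectiveGL2 F) → ℤ)
    (hμ_refl : ∀ x : Subgroup (ProjectiveGL2 F), μ x x = 1)
    (hμ_sum : ∀ x y : Subgroup (ProjectiveGL2 F), x < y →
      ∑ᶠ z ∈ {z : Subgroup (ProjectiveGL2 F) | x ≤ z ∧ z ≤ y}, μ x z = 0) :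
    μ ⊥ ⊤ = 0 := by
  classical
  have : Fact p.Prime := ⟨hp⟩
  have : CharP F p := charP_of_card_eq_prime_pow hF
  have : NeZero (2 : F) := ⟨Ring.two_ne_zero fun h2 ↦
    hodd.ne_two_of_dvd_nat dvd_rfl ((ringChar.eq F p).symm.trans h2)⟩
  have hsq := isSquare_intCast_of_card_eq (Nat.one_le_iff_ne_zero.1 hn) hF
  have := Fintype.ofFinite (Subgroup (ProjectiveGL2 F))
  let := Fintype.toLocallyFiniteOrder (α := Subgroup (ProjectiveGL2 F))
  rw [eq_mu_of_finsum_eq_zero hμ_refl hμ_sum bot_le]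
  exact mu_bot_top_eq_zero_of_index_two ProjectiveGL2.socleSL2_index_eq_two fun t htN htt ↦
    ProjectiveGL2.mu_zpowers_top_eq_zero hF (by exact_mod_cast hsq (-1))
      (by exact_mod_cast hsq 2) htN htt
end

section
/- Let p be an odd prime, n ≥ 1, q = p^(2^n), and G = PGL₂(F_q). If H and K are distinct subgroups of G, each isomorphic to the dihedral group of order 2(q−1) or to the dihedral group of order 2(q+1), then the intersection H ∩ K is either trivial, or cyclic of order 2, or a Klein four-group. -/
open Matrix

/-!
An element `g` of `PGL₂(F)` with `g² ≠ 1` has a lift of nonzero trace, so elements commuting with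
`g` have lifts commuting with that of `g`. Such a lift is scalar as soon as it fixes one point of
`ℙ¹(F)` moved by `g`: the centralizer of `g` acts freely on the orbit of that point, and therefore
has at most `q + 1` elements. If `g` lies in a dihedral subgroup `H` of order `2(q ± 1)`, its
centralizer is then too small to exceed the rotation subgroup of `H`, so `H` consists exactly of
the elements conjugating `g` to `g` or `g⁻¹`. In particular `g` determines `H`, and two distinct
such subgroups share only elements of square `1`; these form an elementary abelian 2-subgroup of a
dihedral group, which has order at most four.
-/

lemma eq_bot_or_card_two_or_isKleinFour {G : Type*} [Group G] {L : Subgroup G}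
    (hcard : Nat.card L ∣ 4) (hexp : Monoid.exponent L ∣ 2) :
    L = ⊥ ∨ (IsCyclic L ∧ Nat.card L = 2) ∨ IsKleinFour L := by
  obtain ⟨k, hk, hL⟩ := (Nat.dvd_prime_pow Nat.prime_two (m := 2)).1 hcard
  interval_cases k
  · exact .inl (Subgroup.card_eq_one.1 hL)
  · have := Fact.mk Nat.prime_two
    exact .inr (.inl ⟨isCyclic_of_prime_card hL, hL⟩)
  · refine .inr (.inr ⟨hL, (Nat.dvd_prime Nat.prime_two).1 hexp |>.resolve_left fun h ↦ ?_⟩)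
    have := Monoid.exp_eq_one_iff.1 h
    simp at hL

section DihedralGroup

open DihedralGroup (r sr)

variable {m : ℕ}

lemma mem_zpowers_r_one {x : DihedralGroup m} :
    x ∈ Subgroup.zpowers (r 1 : DihedralGroup m) ↔ ∃ k, x = r k := by
  simp only [Subgroup.mem_zpowers_iff, DihedralGroup.r_one_zpow]
  exact ⟨fun ⟨k, hk⟩ ↦ ⟨k, hk.symm⟩, fun ⟨k, hk⟩ ↦ ⟨k.cast, by simp [hk]⟩⟩

lemma index_zpowers_r_one : (Subgroup.zpowers (r 1 : DihedralGroup m)).index = 2 := by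
  refine Subgroup.index_eq_two_iff_exists_notMem_and.2 ⟨sr 0, by simp [mem_zpowers_r_one], ?_⟩
  rintro (k | k) <;> simp [mem_zpowers_r_one]

lemma card_dvd_four_of_injective_dihedral {L : Type*} [Group L] (hexp : Monoid.exponent L ∣ 2)
    {φ : L →* DihedralGroup m} (hφ : Function.Injective φ) : Nat.card L ∣ 4 := by
  let rot := Subgroup.zpowers (r 1 : DihedralGroup m)
  have hindex : (rot.comap φ).index ∣ 2 := by
    have := Subgroup.normal_of_index_eq_two (index_zpowers_r_one (m := m))
    rw [Subgroup.index_comap, ← index_zpowers_r_one (m := m)]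
    exact rot.relIndex_dvd_index_of_normal _
  have hcard : Nat.card (rot.comap φ) ∣ 2 := by
    have : IsCyclic (rot.comap φ) := isCyclic_of_injective (φ.subgroupComap rot)
      fun x y hxy ↦ Subtype.ext (hφ (congrArg Subtype.val hxy))
    rw [← IsCyclic.exponent_eq_card]
    exact (Monoid.exponent_dvd_of_monoidHom _ (rot.comap φ).subtype_injective).trans hexp
  exact (rot.comap φ).card_mul_index ▸ mul_dvd_mul hcard hindex

lemma dihedral_sq_eq_one_of_dvd_two (hm : m ∣ 2) (x : DihedralGroup m) : x ^ 2 = 1 :=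
  orderOf_dvd_iff_pow_eq_one.1 <| (Monoid.order_dvd_exponent x).trans <| by
    rw [DihedralGroup.exponent]
    exact Nat.lcm_dvd hm dvd_rfl

lemma dihedral_exists_eq_r_of_sq_ne_one {x : DihedralGroup m} (hx : x ^ 2 ≠ 1) : ∃ k, x = r k := by
  rcases x with k | k
  · exact ⟨k, rfl⟩
  · simp [sq] at hx

lemma dihedral_conj_r_eq_or_eq_inv (y : DihedralGroup m) (k : ZMod m) :
    y * r k * y⁻¹ = r k ∨ y * r k * y⁻¹ = (r k)⁻¹ := by
  rcases y with j | j <;> simp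

variable {G : Type*} [Group G] {φ : DihedralGroup m →* G} {k : ZMod m}

lemma centralizer_map_r_le_range (hφ : Function.Injective φ)
    [Finite (Subgroup.centralizer {φ (r k)})]
    (hcard : Nat.card (Subgroup.centralizer {φ (r k)}) < 2 * m) :
    Subgroup.centralizer {φ (r k)} ≤ φ.range := by
  let rot := Subgroup.zpowers (φ (r 1))
  have hle : rot ≤ Subgroup.centralizer {φ (r k)} := by
    rw [Subgroup.zpowers_le, Subgroup.mem_centralizer_singleton_iff]
    simp only [← map_mul, DihedralGroup.r_mul_r, add_comm]
  have hrot : Nat.card rot = m := by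
    rw [Nat.card_zpowers, orderOf_injective φ hφ, DihedralGroup.orderOf_r_one]
  have heq : Nat.card (Subgroup.centralizer {φ (r k)}) = m :=
    Nat.eq_of_dvd_of_lt_two_mul Nat.card_pos.ne' (hrot.symm.dvd.trans (Subgroup.card_dvd_of_le hle))
      hcard
  rw [← Subgroup.eq_of_le_of_card_ge hle (heq.trans hrot.symm).le, Subgroup.zpowers_le]
  exact ⟨r 1, rfl⟩

/-- A dihedral subgroup with small centralizers is recovered from any one of its rotations that is
not an involution: it is the extended centralizer of that rotation. -/
lemma mem_range_iff_conj_map_r (hφ : Function.Injective φ)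
    [Finite (Subgroup.centralizer {φ (r k)})]
    (hcard : Nat.card (Subgroup.centralizer {φ (r k)}) < 2 * m) {h : G} :
    h ∈ φ.range ↔ h * φ (r k) * h⁻¹ = φ (r k) ∨ h * φ (r k) * h⁻¹ = (φ (r k))⁻¹ := by
  have hcent : ∀ {a : G}, a * φ (r k) * a⁻¹ = φ (r k) → a ∈ φ.range := fun ha ↦
    centralizer_map_r_le_range hφ hcard <|
      Subgroup.mem_centralizer_singleton_iff.2 (mul_inv_eq_iff_eq_mul.1 ha)
  constructor
  · rintro ⟨y, rfl⟩
    simpa only [← map_mul, ← map_inv, hφ.eq_iff] using dihedral_conj_r_eq_or_eq_inv y k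
  · rintro (hh | hh)
    · exact hcent hh
    · have hfix : φ (sr 0) * h * φ (r k) * (φ (sr 0) * h)⁻¹ = φ (r k) := by
        calc _ = φ (sr 0) * (h * φ (r k) * h⁻¹) * (φ (sr 0))⁻¹ := by group
          _ = φ (r k) := by simp [hh, ← map_mul, ← map_inv]
      exact (Subgroup.mul_mem_cancel_left _ (MonoidHom.mem_range.2 ⟨sr 0, rfl⟩)).1 (hcent hfix)

end DihedralGroup

section ProjectiveLinearGroup

open scoped MatrixGroups LinearAlgebra.Projectivization

section Lifts

variable {n R : Type*} [Fintype n] [DecidableEq n] [CommRing R]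

/-- If `A * B` and `B * A` differ by a scalar `u`, then `A` and `u • A` are conjugate, so comparing
traces gives `u = 1`. -/
lemma commute_of_commute_pgl_mk [NoZeroDivisors R] {A B : GL n R}
    (hA : (A : Matrix n n R).trace ≠ 0)
    (h : Commute (ProjGenLinGroup.mk A) (ProjGenLinGroup.mk B)) : Commute A B := by
  have hmk : ProjGenLinGroup.mk A = ProjGenLinGroup.mk (B * A * B⁻¹) := by
    rw [map_mul, map_mul, map_inv, ← h.eq, mul_inv_cancel_right]
  obtain ⟨u, hu⟩ := ProjGenLinGroup.mk_eq_mk_iff.1 hmk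
  have htrace : (A : Matrix n n R).trace * u = (A : Matrix n n R).trace := by
    calc (A : Matrix n n R).trace * u
        = ((A * .scalar n u : GL n R) : Matrix n n R).trace := by
          simp [← smul_eq_mul_diagonal, mul_comm]
      _ = (A : Matrix n n R).trace := by rw [hu, Units.val_mul, Units.val_mul, trace_units_conj]
  have hu_one : u = 1 := Units.ext (mul_left_cancel₀ hA (htrace.trans (mul_one _).symm))
  rw [hu_one, map_one, mul_one] at hu
  exact mul_inv_eq_iff_eq_mul.1 hu.symm |>.symm

lemma sq_eq_scalar_neg_det_of_trace_eq_zero {M : Matrix (Fin 2) (Fin 2) R} (hM : M.trace = 0) :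
    M ^ 2 = scalar (Fin 2) (-M.det) := by
  nontriviality R
  have hcayley := M.aeval_self_charpoly
  rw [charpoly_fin_two, hM] at hcayley
  simpa [add_eq_zero_iff_eq_neg, algebraMap_eq_diagonal, Pi.algebraMap_def] using hcayley

lemma pgl_mk_sq_eq_one_of_trace_eq_zero {A : GL (Fin 2) R}
    (hA : (A : Matrix (Fin 2) (Fin 2) R).trace = 0) : ProjGenLinGroup.mk A ^ 2 = 1 := by
  rw [← map_pow, ProjGenLinGroup.mk_eq_one, GeneralLinearGroup.mem_center_iff_val_mem_range_scalar]
  refine ⟨-(A : Matrix (Fin 2) (Fin 2) R).det, ?_⟩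
  rw [Units.val_pow_eq_pow_val, sq_eq_scalar_neg_det_of_trace_eq_zero hA]

instance pgl_finite [Finite R] : Finite PGL(n, R) :=
  Quotient.finite _

end Lifts

variable {F : Type*} [Field F]

lemma pgl_mk_eq_one_of_forall_smul_eq {n : Type*} [Fintype n] [DecidableEq n] {A : GL n F}
    (hA : ∀ P : ℙ F (n → F), ProjGenLinGroup.mk A • P = P) : ProjGenLinGroup.mk A = 1 := by
  obtain ⟨a, ha⟩ := (toLin' (A : Matrix n n F)).exists_eq_smul_id_of_forall_notLinearIndependent
    fun v ↦ by
      by_cases hv : v = 0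
      · simp [hv, linearIndependent_fin2]
      · simpa [LinearIndependent.pair_iff' hv, Projectivization.mk_eq_mk_iff'] using!
          hA (.mk F v hv)
  rw [ProjGenLinGroup.mk_eq_one, GeneralLinearGroup.mem_center_iff_val_mem_range_scalar]
  exact ⟨a, by rw [← LinearMap.toMatrix'_algebraMap, Module.algebraMap_end_eq_smul_id,
    ← Module.End.one_eq_id, ← ha, LinearMap.toMatrix'_toLin']⟩

lemma pgl_mk_eq_one_of_commute_of_smul_eq {A B : GL (Fin 2) F} (hAB : Commute A B)
    {P : ℙ F (Fin 2 → F)} (hA : ProjGenLinGroup.mk A • P ≠ P)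
    (hB : ProjGenLinGroup.mk B • P = P) : ProjGenLinGroup.mk B = 1 := by
  induction P using Projectivization.ind with | _ v hv
  rw [Projectivization.PGL.mk_smul_mk, Projectivization.mk_eq_mk_iff'] at hB
  rw [Projectivization.PGL.mk_smul_mk, ne_eq, Projectivization.mk_eq_mk_iff', not_exists,
    ← LinearIndependent.pair_iff' hv] at hA
  obtain ⟨c, hc⟩ := hB
  have hspan : ∀ w : Fin 2 → F, ∃ s t : F, s • v + t • A • v = w := fun w ↦ by
    rw [← Submodule.mem_span_pair, ← range_cons_cons_empty v (A • v) ![],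
      hA.span_eq_top_of_card_eq_finrank' (by simp)]
    exact Submodule.mem_top
  refine pgl_mk_eq_one_of_forall_smul_eq fun P ↦ ?_
  induction P using Projectivization.ind with | _ w hw
  rw [Projectivization.PGL.mk_smul_mk, Projectivization.mk_eq_mk_iff']
  refine ⟨c, ?_⟩
  obtain ⟨s, t, rfl⟩ := hspan w
  have hBA : B • A • v = c • A • v := by
    rw [← mul_smul, ← hAB.eq, mul_smul, ← hc, smul_comm]
  rw [smul_add, smul_add, smul_comm B, smul_comm B, hBA, ← hc, smul_comm c, smul_comm c]

lemma pgl_card_centralizer_le [Finite F] {g : PGL(2, F)} (hg : g ^ 2 ≠ 1) :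
    Nat.card (Subgroup.centralizer {g}) ≤ Nat.card F + 1 := by
  obtain ⟨A, rfl⟩ := ProjGenLinGroup.mk_surjective g
  obtain ⟨P, hP⟩ : ∃ P : ℙ F (Fin 2 → F), ProjGenLinGroup.mk A • P ≠ P := by
    by_contra! hfix
    exact hg (by rw [pgl_mk_eq_one_of_forall_smul_eq hfix, one_pow])
  have hfree : ∀ b ∈ Subgroup.centralizer {ProjGenLinGroup.mk A}, b • P = P → b = 1 := by
    intro b hb hbP
    obtain ⟨B, rfl⟩ := ProjGenLinGroup.mk_surjective b
    have hAB := commute_of_commute_pgl_mk (mt pgl_mk_sq_eq_one_of_trace_eq_zero hg)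
      (Subgroup.mem_centralizer_singleton_iff.1 hb).symm
    exact pgl_mk_eq_one_of_commute_of_smul_eq hAB hP hbP
  have horbit : Function.Injective
      fun b : Subgroup.centralizer {ProjGenLinGroup.mk A} ↦ (b : PGL(2, F)) • P := by
    intro b c hbc
    have hfix : ((b : PGL(2, F))⁻¹ * c) • P = P := by
      rw [mul_smul, inv_smul_eq_iff]
      exact hbc.symm
    exact Subtype.ext (inv_mul_eq_one.1 (hfree _ (mul_mem (inv_mem b.2) c.2) hfix))
  have := Nat.card_le_card_of_injective _ horbit
  rwa [Projectivization.card_of_finrank_two F _ (by simp)] at this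

variable [Finite F] {H : Subgroup PGL(2, F)}

lemma dihedral_mem_iff_conj_eq_or_eq_inv_of_card_lt {m : ℕ} (e : H ≃* DihedralGroup m)
    (hm : Nat.card F + 1 < 2 * m) {g : PGL(2, F)} (hgH : g ∈ H) (hg : g ^ 2 ≠ 1) {h : PGL(2, F)} :
    h ∈ H ↔ h * g * h⁻¹ = g ∨ h * g * h⁻¹ = g⁻¹ := by
  let φ : DihedralGroup m →* PGL(2, F) := H.subtype.comp e.symm
  have hφ : Function.Injective φ := H.subtype_injective.comp e.symm.injective
  have hrange : φ.range = H := by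
    rw [MonoidHom.range_comp, MonoidHom.range_eq_top.2 e.symm.surjective, ← MonoidHom.range_eq_map,
      H.range_subtype]
  obtain ⟨x, rfl⟩ : ∃ x, φ x = g := MonoidHom.mem_range.1 (hrange ▸ hgH)
  obtain ⟨k, rfl⟩ : ∃ k, x = .r k :=
    dihedral_exists_eq_r_of_sq_ne_one fun hx ↦ hg (by rw [← map_pow, hx, map_one])
  rw [← mem_range_iff_conj_map_r hφ ((pgl_card_centralizer_le hg).trans_lt hm), hrange]

lemma dihedral_mem_iff_conj_eq_or_eq_inv
    (hH : Nonempty (H ≃* DihedralGroup (Nat.card F - 1)) ∨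
      Nonempty (H ≃* DihedralGroup (Nat.card F + 1)))
    {g : PGL(2, F)} (hgH : g ∈ H) (hg : g ^ 2 ≠ 1) {h : PGL(2, F)} :
    h ∈ H ↔ h * g * h⁻¹ = g ∨ h * g * h⁻¹ = g⁻¹ := by
  have hq : 1 < Nat.card F := Finite.one_lt_card
  rcases hH with ⟨⟨e⟩⟩ | ⟨⟨e⟩⟩
  · have hndvd : ¬ Nat.card F - 1 ∣ 2 := fun hdvd ↦ by
      have hsq : (⟨g, hgH⟩ : H) ^ 2 = 1 :=
        e.injective (by rw [map_pow, map_one, dihedral_sq_eq_one_of_dvd_two hdvd])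
      exact hg (congrArg Subtype.val hsq)
    have hq_three : 3 < Nat.card F := by
      by_contra! hle
      interval_cases Nat.card F <;> simp at hndvd
    exact dihedral_mem_iff_conj_eq_or_eq_inv_of_card_lt e (by lia) hgH hg
  · exact dihedral_mem_iff_conj_eq_or_eq_inv_of_card_lt e (by lia) hgH hg

theorem dihedral_inter_dihedral_general {K : Subgroup PGL(2, F)}
    (hH : Nonempty (H ≃* DihedralGroup (Nat.card F - 1)) ∨
      Nonempty (H ≃* DihedralGroup (Nat.card F + 1)))
    (hK : Nonempty (K ≃* DihedralGroup (Nat.card F - 1)) ∨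
      Nonempty (K ≃* DihedralGroup (Nat.card F + 1)))
    (hne : H ≠ K) :
    H ⊓ K = ⊥ ∨ (IsCyclic ↥(H ⊓ K) ∧ Nat.card ↥(H ⊓ K) = 2) ∨ IsKleinFour ↥(H ⊓ K) := by
  have hexp : Monoid.exponent ↥(H ⊓ K) ∣ 2 := by
    refine Monoid.exponent_dvd_of_forall_pow_eq_one fun ⟨g, hgH, hgK⟩ ↦ ?_
    by_contra hsq
    have hg : g ^ 2 ≠ 1 := fun h ↦ hsq (Subtype.ext h)
    exact hne <| SetLike.ext fun _ ↦ (dihedral_mem_iff_conj_eq_or_eq_inv hH hgH hg).trans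
      (dihedral_mem_iff_conj_eq_or_eq_inv hK hgK hg).symm
  have hincl := Subgroup.inclusion_injective (inf_le_left : H ⊓ K ≤ H)
  have hcard : Nat.card ↥(H ⊓ K) ∣ 4 := by
    rcases hH with ⟨⟨e⟩⟩ | ⟨⟨e⟩⟩ <;>
      exact card_dvd_four_of_injective_dihedral hexp
        (φ := e.toMonoidHom.comp (Subgroup.inclusion _)) (e.injective.comp hincl)
  exact eq_bot_or_card_two_or_isKleinFour hcard hexp

end ProjectiveLinearGroup

/-- Two distinct maximal-type dihedral subgroups of `PGL₂(q)` intersect in the trivial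
group, a cyclic group of order 2, or a Klein four-group. -/
theorem dihedral_inter_dihedral (p n : ℕ) (hp : Nat.Prime p) (hodd : Odd p) (hn : 1 ≤ n)
    (F : Type) [Field F] [Fintype F] (hF : Fintype.card F = p ^ 2 ^ n)
    (H K : Subgroup (ProjectiveGL2 F))
    (hH : Nonempty (H ≃* DihedralGroup (p ^ 2 ^ n - 1)) ∨
      Nonempty (H ≃* DihedralGroup (p ^ 2 ^ n + 1)))
    (hK : Nonempty (K ≃* DihedralGroup (p ^ 2 ^ n - 1)) ∨
      Nonempty (K ≃* DihedralGroup (p ^ 2 ^ n + 1)))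
    (hne : H ≠ K) :
    H ⊓ K = ⊥ ∨ (IsCyclic ↥(H ⊓ K) ∧ Nat.card ↥(H ⊓ K) = 2) ∨ IsKleinFour ↥(H ⊓ K) := by
  rw [← hF, ← Nat.card_eq_fintype_card] at hH hK
  exact dihedral_inter_dihedral_general hH hK hne
end
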